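/- Given an (algebraically modeled) CLWX 2-algebroid (R, E0, E1, ∂, ρ, ∘, Ω, S, D) over a field k of characteristic 0, form the 3-term chain complex L with L0 = E0, L1 = E1, L2 = R, with d = ∂: L1 → L0 and d = D: L2 → L1 (a complex by (C6)), and define multilinear structure maps on L: λ2 equal to ∘ on the components Ei ⊗ Ej with i + j ≤ 1, λ2(x,f) = S(x, Df) = ρ(x)(f) for x ∈ E0 and f ∈ R, and zero on all other components; λ21 equal to S on the components E0 ⊗ E1 and E1 ⊗ E0 and zero otherwise; λ3 equal to Ω on E0 ⊗ E0 ⊗ E0 and zero otherwise; and λ211 = λ31 = λ32 = λ4 = 0. Then (L, d, λ) is a weak Lie 3-algebra over k. -/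

import Mathlib

namespace WL3

open Finset

/-! ## Graded multilinear maps -/

/-- Cast along an equality of degrees. -/
def gcast {M : ℤ → Type} {i j : ℤ} (h : i = j) (x : M i) : M j := h ▸ x

/-- A degree-`r`, arity-`m` map between ℤ-graded types, given by its components on
homogeneous tuples: its component at degrees `d` maps `L (d 1) ⊗ ⋯ ⊗ L (d m)` to
`M (r + d 1 + ⋯ + d m)`. -/
abbrev MMap (L M : ℤ → Type) (m : ℕ) (r : ℤ) : Type :=
  ∀ d : Fin m → ℤ, (∀ j, L (d j)) → M (r + ∑ j, d j)

variable {L M N : ℤ → Type}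

/-- Cast an `MMap` along equalities of arities and degrees. -/
def mcast {m m' : ℕ} {r r' : ℤ} (hm : m = m') (hr : r = r') (μ : MMap L M m r) :
    MMap L M m' r' := by subst hm; subst hr; exact μ

/-- Koszul sign of the permutation `σ` acting on a tuple of homogeneous elements of
degrees `d`: `∏_{i<j, σ i > σ j} (-1)^(d i · d j)`. -/
def koszulSign {m : ℕ} (d : Fin m → ℤ) (σ : Equiv.Perm (Fin m)) : ℤ :=
  ∏ p ∈ Finset.univ.filter (fun p : Fin m × Fin m => p.1 < p.2 ∧ σ p.2 < σ p.1),
    (-1 : ℤ) ^ (d p.1 * d p.2).natAbs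

/-- The action `μ ↦ μ^σ`, `μ^σ(x₁,…,x_m) = ε(σ;x)·μ(x_{σ⁻¹1},…,x_{σ⁻¹m})`. -/
def pa [∀ i, AddCommGroup (M i)] {m : ℕ} {r : ℤ} (σ : Equiv.Perm (Fin m)) (μ : MMap L M m r) :
    MMap L M m r := fun d x =>
  koszulSign d σ •
    gcast (by rw [Equiv.sum_comp σ.symm d])
      (μ (fun j => d (σ.symm j)) (fun j => x (σ.symm j)))

/-- Degrees of the outer map in a partial composition. -/
def outDeg (m₁ m₂ n : ℕ) (s : ℤ) (d : Fin (m₁ + n + m₂) → ℤ) : Fin (m₁ + 1 + m₂) → ℤ :=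
  Fin.append
    (Fin.append (fun j : Fin m₁ => d (Fin.castAdd m₂ (Fin.castAdd n j)))
      (fun _ : Fin 1 => s + ∑ j : Fin n, d (Fin.castAdd m₂ (Fin.natAdd m₁ j))))
    (fun j : Fin m₂ => d (Fin.natAdd (m₁ + n) j))

theorem outDeg_left (m₁ m₂ n : ℕ) (s : ℤ) (d : Fin (m₁ + n + m₂) → ℤ) (j : Fin m₁) :
    outDeg m₁ m₂ n s d (Fin.castAdd m₂ (Fin.castAdd 1 j))
      = d (Fin.castAdd m₂ (Fin.castAdd n j)) := by
  simp [outDeg, Fin.append_left]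

theorem outDeg_mid (m₁ m₂ n : ℕ) (s : ℤ) (d : Fin (m₁ + n + m₂) → ℤ) (j : Fin 1) :
    outDeg m₁ m₂ n s d (Fin.castAdd m₂ (Fin.natAdd m₁ j))
      = s + ∑ j : Fin n, d (Fin.castAdd m₂ (Fin.natAdd m₁ j)) := by
  simp [outDeg, Fin.append_left, Fin.append_right]

theorem outDeg_right (m₁ m₂ n : ℕ) (s : ℤ) (d : Fin (m₁ + n + m₂) → ℤ) (j : Fin m₂) :
    outDeg m₁ m₂ n s d (Fin.natAdd (m₁ + 1) j) = d (Fin.natAdd (m₁ + n) j) := by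
  simp [outDeg, Fin.append_right]

theorem outDeg_sum (m₁ m₂ n : ℕ) (r s : ℤ) (d : Fin (m₁ + n + m₂) → ℤ) :
    r + ∑ j, outDeg m₁ m₂ n s d j = (r + s) + ∑ j, d j := by
  simp [outDeg, Fin.sum_univ_add, Fin.append_left, Fin.append_right]
  ring

/-- Partial (operadic) composition `μ ∘_{m₁+1} ν` of `μ` (of arity `m₁ + 1 + m₂`) with `ν`
inserted in the slot `m₁ + 1`, with the Koszul sign `(-1)^(|ν|·(d 1 + ⋯ + d m₁))`. -/
def pcomp [∀ i, AddCommGroup (L i)] [∀ i, AddCommGroup (M i)] (m₁ m₂ : ℕ) {n : ℕ} {r s : ℤ}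
    (μ : MMap L M (m₁ + 1 + m₂) r) (ν : MMap L L n s) : MMap L M (m₁ + n + m₂) (r + s) :=
  fun d x =>
    ((-1 : ℤ) ^ (s * ∑ j : Fin m₁, d (Fin.castAdd m₂ (Fin.castAdd n j))).natAbs) •
    gcast (outDeg_sum m₁ m₂ n r s d)
      (μ (outDeg m₁ m₂ n s d)
        (fun j => Fin.addCases (motive := fun t => L (outDeg m₁ m₂ n s d t))
          (fun j' => Fin.addCases (motive := fun t => L (outDeg m₁ m₂ n s d (Fin.castAdd m₂ t)))
            (fun j1 => gcast (outDeg_left m₁ m₂ n s d j1).symm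
              (x (Fin.castAdd m₂ (Fin.castAdd n j1))))
            (fun j0 => gcast (outDeg_mid m₁ m₂ n s d j0).symm
              (ν (fun j2 => d (Fin.castAdd m₂ (Fin.natAdd m₁ j2)))
                 (fun j2 => x (Fin.castAdd m₂ (Fin.natAdd m₁ j2)))))
            j')
          (fun j3 => gcast (outDeg_right m₁ m₂ n s d j3).symm (x (Fin.natAdd (m₁ + n) j3)))
          j))

/-- Composition `μ ∘ g` of an arity-1 map with an arity-`a` map. -/
def comp₁ {a : ℕ} {r s : ℤ} (μ : MMap M N 1 r) (g : MMap L M a s) : MMap L N a (r + s) :=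
  fun d x =>
    gcast (by rw [Fin.sum_univ_one]; ring)
      (μ (fun _ : Fin 1 => s + ∑ j, d j) (fun _ => g d x))

theorem sum2 (a b : ℕ) (r s₁ s₂ : ℤ) (d : Fin (a + b) → ℤ) :
    r + ∑ t : Fin 2, ![s₁ + ∑ j : Fin a, d (Fin.castAdd b j),
                       s₂ + ∑ j : Fin b, d (Fin.natAdd a j)] t
      = (r + (s₁ + s₂)) + ∑ j, d j := by
  simp [Fin.sum_univ_two, Fin.sum_univ_add]
  ring

/-- Full composition `μ ∘ (g₁, g₂)` with Koszul signs. -/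
def comp₂ [∀ i, AddCommGroup (N i)] {a b : ℕ} {r s₁ s₂ : ℤ}
    (μ : MMap M N 2 r) (g₁ : MMap L M a s₁) (g₂ : MMap L M b s₂) :
    MMap L N (a + b) (r + (s₁ + s₂)) :=
  fun d x =>
    ((-1 : ℤ) ^ (s₂ * ∑ j : Fin a, d (Fin.castAdd b j)).natAbs) •
    gcast (sum2 a b r s₁ s₂ d)
      (μ ![s₁ + ∑ j : Fin a, d (Fin.castAdd b j), s₂ + ∑ j : Fin b, d (Fin.natAdd a j)]
        (Fin.cons (gcast (by simp) (g₁ (fun j => d (Fin.castAdd b j)) (fun j => x (Fin.castAdd b j))))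
          (fun _ : Fin 1 => gcast (by simp) (g₂ (fun j => d (Fin.natAdd a j)) (fun j => x (Fin.natAdd a j))))))

theorem sum3 (a b c : ℕ) (r s₁ s₂ s₃ : ℤ) (d : Fin (a + b + c) → ℤ) :
    r + ∑ t : Fin 3, ![s₁ + ∑ j : Fin a, d (Fin.castAdd c (Fin.castAdd b j)),
                       s₂ + ∑ j : Fin b, d (Fin.castAdd c (Fin.natAdd a j)),
                       s₃ + ∑ j : Fin c, d (Fin.natAdd (a + b) j)] t
      = (r + (s₁ + s₂ + s₃)) + ∑ j, d j := by
  simp [Fin.sum_univ_three, Fin.sum_univ_add]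
  ring

/-- Full composition `μ ∘ (g₁, g₂, g₃)` with Koszul signs. -/
def comp₃ [∀ i, AddCommGroup (N i)] {a b c : ℕ} {r s₁ s₂ s₃ : ℤ}
    (μ : MMap M N 3 r) (g₁ : MMap L M a s₁) (g₂ : MMap L M b s₂) (g₃ : MMap L M c s₃) :
    MMap L N (a + b + c) (r + (s₁ + s₂ + s₃)) :=
  fun d x =>
    ((-1 : ℤ) ^ (s₂ * (∑ j : Fin a, d (Fin.castAdd c (Fin.castAdd b j)))
        + s₃ * ((∑ j : Fin a, d (Fin.castAdd c (Fin.castAdd b j)))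
          + ∑ j : Fin b, d (Fin.castAdd c (Fin.natAdd a j)))).natAbs) •
    gcast (sum3 a b c r s₁ s₂ s₃ d)
      (μ ![s₁ + ∑ j : Fin a, d (Fin.castAdd c (Fin.castAdd b j)),
           s₂ + ∑ j : Fin b, d (Fin.castAdd c (Fin.natAdd a j)),
           s₃ + ∑ j : Fin c, d (Fin.natAdd (a + b) j)]
        (Fin.cons (gcast (by simp)
            (g₁ (fun j => d (Fin.castAdd c (Fin.castAdd b j)))
                (fun j => x (Fin.castAdd c (Fin.castAdd b j)))))
          (Fin.cons (gcast (by simp)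
              (g₂ (fun j => d (Fin.castAdd c (Fin.natAdd a j)))
                  (fun j => x (Fin.castAdd c (Fin.natAdd a j)))))
            (fun _ : Fin 1 => gcast (by simp)
              (g₃ (fun j => d (Fin.natAdd (a + b) j))
                  (fun j => x (Fin.natAdd (a + b) j)))))))

theorem sum4 (a b c e : ℕ) (r s₁ s₂ s₃ s₄ : ℤ) (d : Fin (a + b + c + e) → ℤ) :
    r + ∑ t : Fin 4, ![s₁ + ∑ j : Fin a, d (Fin.castAdd e (Fin.castAdd c (Fin.castAdd b j))),
                       s₂ + ∑ j : Fin b, d (Fin.castAdd e (Fin.castAdd c (Fin.natAdd a j))),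
                       s₃ + ∑ j : Fin c, d (Fin.castAdd e (Fin.natAdd (a + b) j)),
                       s₄ + ∑ j : Fin e, d (Fin.natAdd (a + b + c) j)] t
      = (r + (s₁ + s₂ + s₃ + s₄)) + ∑ j, d j := by
  simp [Fin.sum_univ_four, Fin.sum_univ_add]
  ring

/-- Full composition `μ ∘ (g₁, g₂, g₃, g₄)` with Koszul signs. -/
def comp₄ [∀ i, AddCommGroup (N i)] {a b c e : ℕ} {r s₁ s₂ s₃ s₄ : ℤ}
    (μ : MMap M N 4 r) (g₁ : MMap L M a s₁) (g₂ : MMap L M b s₂) (g₃ : MMap L M c s₃)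
    (g₄ : MMap L M e s₄) :
    MMap L N (a + b + c + e) (r + (s₁ + s₂ + s₃ + s₄)) :=
  fun d x =>
    ((-1 : ℤ) ^ (s₂ * (∑ j : Fin a, d (Fin.castAdd e (Fin.castAdd c (Fin.castAdd b j))))
        + s₃ * ((∑ j : Fin a, d (Fin.castAdd e (Fin.castAdd c (Fin.castAdd b j))))
          + ∑ j : Fin b, d (Fin.castAdd e (Fin.castAdd c (Fin.natAdd a j))))
        + s₄ * ((∑ j : Fin a, d (Fin.castAdd e (Fin.castAdd c (Fin.castAdd b j))))
          + (∑ j : Fin b, d (Fin.castAdd e (Fin.castAdd c (Fin.natAdd a j))))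
          + ∑ j : Fin c, d (Fin.castAdd e (Fin.natAdd (a + b) j)))).natAbs) •
    gcast (sum4 a b c e r s₁ s₂ s₃ s₄ d)
      (μ ![s₁ + ∑ j : Fin a, d (Fin.castAdd e (Fin.castAdd c (Fin.castAdd b j))),
           s₂ + ∑ j : Fin b, d (Fin.castAdd e (Fin.castAdd c (Fin.natAdd a j))),
           s₃ + ∑ j : Fin c, d (Fin.castAdd e (Fin.natAdd (a + b) j)),
           s₄ + ∑ j : Fin e, d (Fin.natAdd (a + b + c) j)]
        (Fin.cons (gcast (by simp)
            (g₁ (fun j => d (Fin.castAdd e (Fin.castAdd c (Fin.castAdd b j))))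
                (fun j => x (Fin.castAdd e (Fin.castAdd c (Fin.castAdd b j))))))
          (Fin.cons (gcast (by simp)
              (g₂ (fun j => d (Fin.castAdd e (Fin.castAdd c (Fin.natAdd a j))))
                  (fun j => x (Fin.castAdd e (Fin.castAdd c (Fin.natAdd a j))))))
            (Fin.cons (gcast (by simp)
                (g₃ (fun j => d (Fin.castAdd e (Fin.natAdd (a + b) j)))
                    (fun j => x (Fin.castAdd e (Fin.natAdd (a + b) j)))))
              (fun _ : Fin 1 => gcast (by simp)
                (g₄ (fun j => d (Fin.natAdd (a + b + c) j))
                    (fun j => x (Fin.natAdd (a + b + c) j))))))))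

/-- The differential `∂(μ) = D' ∘ μ - (-1)^{|μ|} ∑ᵢ μ ∘ᵢ D`. -/
def bdry [∀ i, AddCommGroup (L i)] [∀ i, AddCommGroup (M i)] {m : ℕ} {r : ℤ}
    (D' : MMap M M 1 (-1)) (D : MMap L L 1 (-1)) (μ : MMap L M m r) : MMap L M m (-1 + r) :=
  comp₁ D' μ - ((-1 : ℤ) ^ r.natAbs) •
    ∑ p : Fin m, mcast (by have := p.isLt; omega) (by ring)
      (pcomp p.val (m - 1 - p.val) (mcast (by have := p.isLt; omega) rfl μ) D)

/-- The identity, as an `MMap`. -/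
def idm : MMap L L 1 0 := fun d x => gcast (by rw [Fin.sum_univ_one, zero_add]) (x 0)

/-- `μ ∘_{m₁+1} ν`, recast to a specified target degree `R`. -/
def pc [∀ i, AddCommGroup (L i)] [∀ i, AddCommGroup (M i)] (R : ℤ) (m₁ m₂ : ℕ) {n : ℕ}
    {r s : ℤ} (μ : MMap L M (m₁ + 1 + m₂) r) (ν : MMap L L n s)
    (h : r + s = R := by norm_num) : MMap L M (m₁ + n + m₂) R :=
  mcast rfl h (pcomp m₁ m₂ μ ν)

/-- `μ ∘ g`, recast to a specified target degree `R`. -/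
def fc1 (R : ℤ) {a : ℕ} {r s : ℤ} (μ : MMap M N 1 r) (g : MMap L M a s)
    (h : r + s = R := by norm_num) : MMap L N a R :=
  mcast rfl h (comp₁ μ g)

/-- `μ ∘ (g₁, g₂)`, recast to a specified target degree `R`. -/
def fc2 [∀ i, AddCommGroup (N i)] (R : ℤ) {a b : ℕ} {r s₁ s₂ : ℤ}
    (μ : MMap M N 2 r) (g₁ : MMap L M a s₁) (g₂ : MMap L M b s₂)
    (h : r + (s₁ + s₂) = R := by norm_num) : MMap L N (a + b) R :=
  mcast rfl h (comp₂ μ g₁ g₂)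

/-- `μ ∘ (g₁, g₂, g₃)`, recast to a specified target degree `R`. -/
def fc3 [∀ i, AddCommGroup (N i)] (R : ℤ) {a b c : ℕ} {r s₁ s₂ s₃ : ℤ}
    (μ : MMap M N 3 r) (g₁ : MMap L M a s₁) (g₂ : MMap L M b s₂) (g₃ : MMap L M c s₃)
    (h : r + (s₁ + s₂ + s₃) = R := by norm_num) : MMap L N (a + b + c) R :=
  mcast rfl h (comp₃ μ g₁ g₂ g₃)

/-- `μ ∘ (g₁, g₂, g₃, g₄)`, recast to a specified target degree `R`. -/
def fc4 [∀ i, AddCommGroup (N i)] (R : ℤ) {a b c e : ℕ} {r s₁ s₂ s₃ s₄ : ℤ}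
    (μ : MMap M N 4 r) (g₁ : MMap L M a s₁) (g₂ : MMap L M b s₂) (g₃ : MMap L M c s₃)
    (g₄ : MMap L M e s₄) (h : r + (s₁ + s₂ + s₃ + s₄) = R := by norm_num) :
    MMap L N (a + b + c + e) R :=
  mcast rfl h (comp₄ μ g₁ g₂ g₃ g₄)

/-- `∂(μ)`, recast to a specified target degree `R`. -/
def bd [∀ i, AddCommGroup (L i)] [∀ i, AddCommGroup (M i)] (R : ℤ) {m : ℕ} {r : ℤ}
    (D' : MMap M M 1 (-1)) (D : MMap L L 1 (-1)) (μ : MMap L M m r)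
    (h : -1 + r = R := by norm_num) : MMap L M m R :=
  mcast rfl h (bdry D' D μ)

/-- Multilinearity over `k` of the components of an `MMap`. -/
def IsMultilinear (k : Type) [CommRing k] {L M : ℤ → Type} [∀ i, AddCommGroup (L i)]
    [∀ i, AddCommGroup (M i)] [∀ i, Module k (L i)] [∀ i, Module k (M i)] {m : ℕ} {r : ℤ}
    (μ : MMap L M m r) : Prop :=
  ∀ (d : Fin m → ℤ) (x : ∀ j, L (d j)) (j : Fin m),
    (∀ a b : L (d j), μ d (Function.update x j (a + b))
        = μ d (Function.update x j a) + μ d (Function.update x j b)) ∧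
    (∀ (c : k) (a : L (d j)), μ d (Function.update x j (c • a)) = c • μ d (Function.update x j a))

/-! ## Permutations (0-indexed; a cycle `(a b c)` is `swap a b * swap b c`) -/

def P12 (m : ℕ) [NeZero m] : Equiv.Perm (Fin m) := Equiv.swap 0 1
def P13 (m : ℕ) [NeZero m] : Equiv.Perm (Fin m) := Equiv.swap 0 2
def P23 (m : ℕ) [NeZero m] : Equiv.Perm (Fin m) := Equiv.swap 1 2
def P34 (m : ℕ) [NeZero m] : Equiv.Perm (Fin m) := Equiv.swap 2 3
def P123 (m : ℕ) [NeZero m] : Equiv.Perm (Fin m) := Equiv.swap 0 1 * Equiv.swap 1 2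
def P132 (m : ℕ) [NeZero m] : Equiv.Perm (Fin m) := Equiv.swap 0 2 * Equiv.swap 2 1
def P234 (m : ℕ) [NeZero m] : Equiv.Perm (Fin m) := Equiv.swap 1 2 * Equiv.swap 2 3
def P243 (m : ℕ) [NeZero m] : Equiv.Perm (Fin m) := Equiv.swap 1 3 * Equiv.swap 3 2
def P1234 (m : ℕ) [NeZero m] : Equiv.Perm (Fin m) :=
  Equiv.swap 0 1 * Equiv.swap 1 2 * Equiv.swap 2 3
def P1432 (m : ℕ) [NeZero m] : Equiv.Perm (Fin m) :=
  Equiv.swap 0 3 * Equiv.swap 3 2 * Equiv.swap 2 1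
def P1342 (m : ℕ) [NeZero m] : Equiv.Perm (Fin m) :=
  Equiv.swap 0 2 * Equiv.swap 2 3 * Equiv.swap 3 1
def P13P24 (m : ℕ) [NeZero m] : Equiv.Perm (Fin m) := Equiv.swap 0 2 * Equiv.swap 1 3

end WL3
namespace WL3

open Finset

variable (k : Type) [CommRing k]

/-- A Leibniz 3-algebra structure: maps `l2, l3, l4` on a complex with differential `D`
satisfying the generalized Jacobi identities (L1)–(L4). -/
structure IsLeibniz3 {L : ℤ → Type} [∀ i, AddCommGroup (L i)] [∀ i, Module k (L i)]
    (D : MMap L L 1 (-1)) (l2 : MMap L L 2 0) (l3 : MMap L L 3 1) (l4 : MMap L L 4 2) :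
    Prop where
  lin2 : IsMultilinear k l2
  lin3 : IsMultilinear k l3
  lin4 : IsMultilinear k l4
  eqL1 : bd (-1) D D l2 = 0
  eqL2 : bd 0 D D l3 =
    pc 0 1 0 l2 l2 - pc 0 0 1 l2 l2 - pa (P12 3) (pc 0 1 0 l2 l2)
  eqL3 : bd 1 D D l4 =
    pc 1 0 1 l2 l3 + pc 1 1 0 l2 l3 - pa (P12 4) (pc 1 1 0 l2 l3)
      + pa (P123 4) (pc 1 1 0 l2 l3) - pc 1 0 2 l3 l2
      + pc 1 1 1 l3 l2 - pa (P12 4) (pc 1 1 1 l3 l2)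
      - pc 1 2 0 l3 l2 + pa (P23 4) (pc 1 2 0 l3 l2) - pa (P132 4) (pc 1 2 0 l3 l2)
  eqL4 : (0 : MMap L L 5 2) =
    pc 2 0 1 l2 l4 - pc 2 1 0 l2 l4 + pa (P12 5) (pc 2 1 0 l2 l4)
      - pa (P123 5) (pc 2 1 0 l2 l4) + pa (P1234 5) (pc 2 1 0 l2 l4)
      + pc 2 0 2 l3 l3 + pc 2 1 1 l3 l3 - pa (P12 5) (pc 2 1 1 l3 l3)
      + pa (P123 5) (pc 2 1 1 l3 l3) + pc 2 2 0 l3 l3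
      - pa (P23 5) (pc 2 2 0 l3 l3) + pa (P132 5) (pc 2 2 0 l3 l3)
      + pa (P234 5) (pc 2 2 0 l3 l3) - pa (P1342 5) (pc 2 2 0 l3 l3)
      + pa (P13P24 5) (pc 2 2 0 l3 l3)
      + pc 2 0 3 l4 l2 - pc 2 1 2 l4 l2 + pa (P12 5) (pc 2 1 2 l4 l2)
      + pc 2 2 1 l4 l2 - pa (P23 5) (pc 2 2 1 l4 l2) + pa (P132 5) (pc 2 2 1 l4 l2)
      - pc 2 3 0 l4 l2 + pa (P34 5) (pc 2 3 0 l4 l2) - pa (P243 5) (pc 2 3 0 l4 l2)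
      + pa (P1432 5) (pc 2 3 0 l4 l2)

/-- A weak Lie 3-algebra: a 3-term chain complex equipped with structure maps
`l2, l3, l4, l21, l211, l31, l32` satisfying (L1)–(L4) and (W1)–(W11). -/
structure WeakLie3 (L : ℤ → Type) [∀ i, AddCommGroup (L i)] [∀ i, Module k (L i)] where
  D : MMap L L 1 (-1)
  linD : IsMultilinear k D
  dd : fc1 (-2) D D = 0
  bound : ∀ i : ℤ, (i < 0 ∨ 2 < i) → ∀ x : L i, x = 0
  l2 : MMap L L 2 0
  l3 : MMap L L 3 1
  l4 : MMap L L 4 2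
  l21 : MMap L L 2 1
  l211 : MMap L L 2 2
  l31 : MMap L L 3 2
  l32 : MMap L L 3 2
  leib : IsLeibniz3 k D l2 l3 l4
  lin21 : IsMultilinear k l21
  lin211 : IsMultilinear k l211
  lin31 : IsMultilinear k l31
  lin32 : IsMultilinear k l32
  w1 : bd 0 D D l21 = l2 + pa (P12 2) l2
  w2 : bd 1 D D l211 = l21 - pa (P12 2) l21
  w3 : bd 1 D D l31 = l3 + pa (P12 3) l3 + pc 1 0 1 l2 l21
  w4 : bd 1 D D l32 = l3 + pa (P23 3) l3 - pc 1 1 0 l2 l21 + pc 1 0 1 l21 l2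
        + pa (P12 3) (pc 1 1 0 l21 l2)
  w5 : l211 + pa (P12 2) l211 = 0
  w6 : l31 - pa (P12 3) l31 = pc 2 0 1 l2 l211
  w7 : l31 - pa (P12 3) l32 + pa (P132 3) l31 - l32 + pa (P23 3) l31 - pa (P123 3) l32
        = pc 2 1 0 l21 l21 + pc 2 0 1 l21 l21 + pa (P12 3) (pc 2 1 0 l21 l21)
          + pa (P132 3) (pc 2 1 0 l211 l2)
  w8 : l32 - pa (P23 3) l32 = - pc 2 1 0 l2 l211 + pc 2 0 1 l211 l2
        + pa (P12 3) (pc 2 1 0 l211 l2)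
  w9 : l4 + pa (P12 4) l4 = pc 2 0 1 l2 l31 - pc 2 2 0 l31 l2
        + pa (P123 4) (pc 2 1 0 l2 l31) + pc 2 0 2 l3 l21
  w10 : l4 + pa (P23 4) l4 = pc 2 0 1 l2 l32 - pc 2 1 1 l3 l21 + pc 2 1 0 l2 l31
        - pc 2 0 2 l31 l2 - pa (P12 4) (pc 2 1 1 l31 l2) - pa (P132 4) (pc 2 2 0 l31 l2)
  w11 : l4 + pa (P34 4) l4 = pc 2 0 1 l21 l3 - pc 2 0 2 l32 l2 + pc 2 1 1 l32 l2
        - pa (P12 4) (pc 2 1 1 l32 l2) + pc 2 2 0 l3 l21 + pa (P23 4) (pc 2 2 0 l32 l2)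
        - pa (P132 4) (pc 2 2 0 l32 l2) + pc 2 1 0 l2 l32 - pa (P12 4) (pc 2 1 0 l2 l32)
        + pa (P123 4) (pc 2 1 0 l21 l3)

end WL3
namespace WL3

open Finset

variable (k : Type) [CommRing k]

/-- A weak morphism of weak Lie 3-algebras `(f1,f2,f21,f3) : A → B`, i.e. a solution of
equations (M1)–(M8). -/
structure IsWeakMorphism {L M : ℤ → Type} [∀ i, AddCommGroup (L i)] [∀ i, Module k (L i)]
    [∀ i, AddCommGroup (M i)] [∀ i, Module k (M i)]
    (A : WeakLie3 k L) (B : WeakLie3 k M)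
    (f1 : MMap L M 1 0) (f2 : MMap L M 2 1) (f21 : MMap L M 2 2) (f3 : MMap L M 3 2) :
    Prop where
  lin1 : IsMultilinear k f1
  lin2 : IsMultilinear k f2
  lin21 : IsMultilinear k f21
  lin3 : IsMultilinear k f3
  m1 : bd (-1) B.D A.D f1 = 0
  m2 : bd 0 B.D A.D f2 = fc1 0 f1 A.l2 - fc2 0 B.l2 f1 f1
  m3 : bd 1 B.D A.D f3 = fc1 1 f1 A.l3 - pc 1 1 0 f2 A.l2 + pc 1 0 1 f2 A.l2
        + pa (P12 3) (pc 1 1 0 f2 A.l2) - fc3 1 B.l3 f1 f1 f1 - fc2 1 B.l2 f1 f2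
        + fc2 1 B.l2 f2 f1 + pa (P12 3) (fc2 1 B.l2 f1 f2)
  m4 : fc1 2 f1 A.l4 - fc4 2 B.l4 f1 f1 f1 f1 =
        pc 2 0 1 f2 A.l3 + pc 2 1 0 f2 A.l3 - pa (P12 4) (pc 2 1 0 f2 A.l3)
        + pa (P123 4) (pc 2 1 0 f2 A.l3) - pc 2 0 2 f3 A.l2 + pc 2 1 1 f3 A.l2
        - pa (P12 4) (pc 2 1 1 f3 A.l2) - pc 2 2 0 f3 A.l2 + pa (P23 4) (pc 2 2 0 f3 A.l2)
        - pa (P132 4) (pc 2 2 0 f3 A.l2) + fc2 2 B.l2 f3 f1 + fc2 2 B.l2 f1 f3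
        - pa (P12 4) (fc2 2 B.l2 f1 f3) + pa (P123 4) (fc2 2 B.l2 f1 f3)
        - fc2 2 B.l2 f2 f2 + pa (P23 4) (fc2 2 B.l2 f2 f2) - pa (P132 4) (fc2 2 B.l2 f2 f2)
        + fc3 2 B.l3 f2 f1 f1 - fc3 2 B.l3 f1 f2 f1 + pa (P12 4) (fc3 2 B.l3 f1 f2 f1)
        + fc3 2 B.l3 f1 f1 f2 - pa (P23 4) (fc3 2 B.l3 f1 f1 f2)
        + pa (P132 4) (fc3 2 B.l3 f1 f1 f2)
  m5 : bd 1 B.D A.D f21 = - f2 - pa (P12 2) f2 + fc1 1 f1 A.l21 - fc2 1 B.l21 f1 f1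
  m6 : fc1 2 f1 A.l211 - fc2 2 B.l211 f1 f1 = f21 - pa (P12 2) f21
  m7 : fc1 2 f1 A.l31 - fc3 2 B.l31 f1 f1 f1 =
        f3 + pa (P12 3) f3 + pc 2 0 1 f2 A.l21 + fc2 2 B.l2 f21 f1
  m8 : fc1 2 f1 A.l32 - fc3 2 B.l32 f1 f1 f1 =
        f3 + pa (P23 3) f3 - pc 2 1 0 f2 A.l21 + pc 2 0 1 f21 A.l2
        + pa (P12 3) (pc 2 1 0 f21 A.l2) - fc2 2 B.l2 f1 f21 - fc2 2 B.l21 f2 f1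
        - pa (P12 3) (fc2 2 B.l21 f1 f2)

/-- A morphism of (semi-strict) Lie 3-algebras / Leibniz 3-algebras: equations (M1)–(M4)
for structure maps `(a2,a3,a4)` on the source and `(b2,b3,b4)` on the target. -/
structure IsLeibMorphism {L M : ℤ → Type} [∀ i, AddCommGroup (L i)] [∀ i, Module k (L i)]
    [∀ i, AddCommGroup (M i)] [∀ i, Module k (M i)]
    (DL : MMap L L 1 (-1)) (DM : MMap M M 1 (-1))
    (a2 : MMap L L 2 0) (a3 : MMap L L 3 1) (a4 : MMap L L 4 2)
    (b2 : MMap M M 2 0) (b3 : MMap M M 3 1) (b4 : MMap M M 4 2)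
    (f1 : MMap L M 1 0) (f2 : MMap L M 2 1) (f3 : MMap L M 3 2) : Prop where
  lin1 : IsMultilinear k f1
  lin2 : IsMultilinear k f2
  lin3 : IsMultilinear k f3
  m1 : bd (-1) DM DL f1 = 0
  m2 : bd 0 DM DL f2 = fc1 0 f1 a2 - fc2 0 b2 f1 f1
  m3 : bd 1 DM DL f3 = fc1 1 f1 a3 - pc 1 1 0 f2 a2 + pc 1 0 1 f2 a2
        + pa (P12 3) (pc 1 1 0 f2 a2) - fc3 1 b3 f1 f1 f1 - fc2 1 b2 f1 f2
        + fc2 1 b2 f2 f1 + pa (P12 3) (fc2 1 b2 f1 f2)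
  m4 : fc1 2 f1 a4 - fc4 2 b4 f1 f1 f1 f1 =
        pc 2 0 1 f2 a3 + pc 2 1 0 f2 a3 - pa (P12 4) (pc 2 1 0 f2 a3)
        + pa (P123 4) (pc 2 1 0 f2 a3) - pc 2 0 2 f3 a2 + pc 2 1 1 f3 a2
        - pa (P12 4) (pc 2 1 1 f3 a2) - pc 2 2 0 f3 a2 + pa (P23 4) (pc 2 2 0 f3 a2)
        - pa (P132 4) (pc 2 2 0 f3 a2) + fc2 2 b2 f3 f1 + fc2 2 b2 f1 f3
        - pa (P12 4) (fc2 2 b2 f1 f3) + pa (P123 4) (fc2 2 b2 f1 f3)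
        - fc2 2 b2 f2 f2 + pa (P23 4) (fc2 2 b2 f2 f2) - pa (P132 4) (fc2 2 b2 f2 f2)
        + fc3 2 b3 f2 f1 f1 - fc3 2 b3 f1 f2 f1 + pa (P12 4) (fc3 2 b3 f1 f2 f1)
        + fc3 2 b3 f1 f1 f2 - pa (P23 4) (fc3 2 b3 f1 f1 f2)
        + pa (P132 4) (fc3 2 b3 f1 f1 f2)

/-- A deformation retract `(p, i, h)` of `(L, D)` onto `(L', D')`:
`p`, `i` are chain maps, `id - i∘p = D∘h + h∘D` and `p∘i = id`. -/
structure IsDefRetract {L L' : ℤ → Type} [∀ i, AddCommGroup (L i)] [∀ i, Module k (L i)]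
    [∀ i, AddCommGroup (L' i)] [∀ i, Module k (L' i)]
    (D : MMap L L 1 (-1)) (D' : MMap L' L' 1 (-1))
    (p : MMap L L' 1 0) (i : MMap L' L 1 0) (h : MMap L L 1 1) : Prop where
  linp : IsMultilinear k p
  lini : IsMultilinear k i
  linh : IsMultilinear k h
  chainp : bd (-1) D' D p = 0
  chaini : bd (-1) D D' i = 0
  homotopy : idm - fc1 0 i p = fc1 0 D h + fc1 0 h D
  retract : fc1 0 p i = idm

/-- A weak Lie 2-algebra in the sense of Roytenberg (a 2-term truncation of a weak
Lie 3-algebra). -/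
structure WeakLie2 (L : ℤ → Type) [∀ i, AddCommGroup (L i)] [∀ i, Module k (L i)] where
  D : MMap L L 1 (-1)
  linD : IsMultilinear k D
  dd : fc1 (-2) D D = 0
  bound : ∀ i : ℤ, (i < 0 ∨ 1 < i) → ∀ x : L i, x = 0
  l2 : MMap L L 2 0
  l3 : MMap L L 3 1
  l21 : MMap L L 2 1
  lin2 : IsMultilinear k l2
  lin3 : IsMultilinear k l3
  lin21 : IsMultilinear k l21
  e1 : bd (-1) D D l2 = 0
  e2 : bd 0 D D l3 = pc 0 1 0 l2 l2 - pc 0 0 1 l2 l2 - pa (P12 3) (pc 0 1 0 l2 l2)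
  e3 : (0 : MMap L L 4 1) =
    pc 1 0 1 l2 l3 + pc 1 1 0 l2 l3 - pa (P12 4) (pc 1 1 0 l2 l3)
      + pa (P123 4) (pc 1 1 0 l2 l3) - pc 1 0 2 l3 l2
      + pc 1 1 1 l3 l2 - pa (P12 4) (pc 1 1 1 l3 l2)
      - pc 1 2 0 l3 l2 + pa (P23 4) (pc 1 2 0 l3 l2) - pa (P132 4) (pc 1 2 0 l3 l2)
  e4 : bd 0 D D l21 = l2 + pa (P12 2) l2
  e5 : (0 : MMap L L 2 1) = l21 - pa (P12 2) l21
  e6 : (0 : MMap L L 3 1) = l3 + pa (P12 3) l3 + pc 1 0 1 l2 l21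
  e7 : (0 : MMap L L 3 1) = l3 + pa (P23 3) l3 - pc 1 1 0 l2 l21 + pc 1 0 1 l21 l2
        + pa (P12 3) (pc 1 1 0 l21 l2)

end WL3
namespace WL3

open Finset

section Transfer

variable {k : Type} [CommRing k] {L L' : ℤ → Type}
  [∀ i, AddCommGroup (L i)] [∀ i, Module k (L i)]
  [∀ i, AddCommGroup (L' i)] [∀ i, Module k (L' i)]
variable (A : WeakLie3 k L) (p : MMap L L' 1 0) (i : MMap L' L 1 0) (h : MMap L L 1 1)

/-- `h ∘ λ2` -/
def hl2 : MMap L L 2 1 := fc1 1 h A.l2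
/-- `h ∘ λ3` -/
def hl3 : MMap L L 3 2 := fc1 2 h A.l3
/-- `h ∘ λ21` -/
def hl21 : MMap L L 2 2 := fc1 2 h A.l21

/-- Transferred `λ2' = p ∘ λ2 ∘ (i,i)`. -/
def tl2 : MMap L' L' 2 0 := fc1 0 p (fc2 0 A.l2 i i)

/-- Transferred `λ3'`. -/
def tl3 : MMap L' L' 3 1 :=
  fc1 1 p (fc3 1 A.l3 i i i)
  + fc1 1 p (fc3 1 (pc 1 0 1 A.l2 (hl2 A h)
      - (pc 1 1 0 A.l2 (hl2 A h) - pa (P12 3) (pc 1 1 0 A.l2 (hl2 A h)))) i i i)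

/-- Transferred `λ4'`. -/
def tl4 : MMap L' L' 4 2 :=
  fc1 2 p (fc4 2 A.l4 i i i i)
  - fc1 2 p (fc4 2
      (pc 2 0 1 A.l2 (hl3 A h)
        + (pc 2 1 0 A.l2 (hl3 A h) - pa (P12 4) (pc 2 1 0 A.l2 (hl3 A h))
            + pa (P123 4) (pc 2 1 0 A.l2 (hl3 A h)))
        + pc 2 0 2 A.l3 (hl2 A h)
        - (pc 2 1 1 A.l3 (hl2 A h) - pa (P12 4) (pc 2 1 1 A.l3 (hl2 A h)))
        + (pc 2 2 0 A.l3 (hl2 A h) - pa (P23 4) (pc 2 2 0 A.l3 (hl2 A h))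
            + pa (P132 4) (pc 2 2 0 A.l3 (hl2 A h)))) i i i i)
  - fc1 2 p (fc4 2
      (pc 2 0 2 (pc 1 0 1 A.l2 (hl2 A h)) (hl2 A h)
        - (pc 2 1 1 (pc 1 0 1 A.l2 (hl2 A h)) (hl2 A h)
            - pa (P12 4) (pc 2 1 1 (pc 1 0 1 A.l2 (hl2 A h)) (hl2 A h)))
        + (fc2 2 A.l2 (hl2 A h) (hl2 A h) - pa (P23 4) (fc2 2 A.l2 (hl2 A h) (hl2 A h))
            + pa (P132 4) (fc2 2 A.l2 (hl2 A h) (hl2 A h)))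
        + (pc 2 1 1 (pc 1 1 0 A.l2 (hl2 A h)) (hl2 A h)
            - pa (P12 4) (pc 2 1 1 (pc 1 1 0 A.l2 (hl2 A h)) (hl2 A h))
            + pa (P123 4) (pc 2 1 1 (pc 1 1 0 A.l2 (hl2 A h)) (hl2 A h)))
        - (pc 2 2 0 (pc 1 1 0 A.l2 (hl2 A h)) (hl2 A h)
            - pa (P12 4) (pc 2 2 0 (pc 1 1 0 A.l2 (hl2 A h)) (hl2 A h))
            + pa (P123 4) (pc 2 2 0 (pc 1 1 0 A.l2 (hl2 A h)) (hl2 A h))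
            - pa (P23 4) (pc 2 2 0 (pc 1 1 0 A.l2 (hl2 A h)) (hl2 A h))
            + pa (P132 4) (pc 2 2 0 (pc 1 1 0 A.l2 (hl2 A h)) (hl2 A h))
            - pa (P13 4) (pc 2 2 0 (pc 1 1 0 A.l2 (hl2 A h)) (hl2 A h)))) i i i i)

/-- Transferred `λ21' = p ∘ λ21 ∘ (i,i)`. -/
def tl21 : MMap L' L' 2 1 := fc1 1 p (fc2 1 A.l21 i i)

/-- Transferred `λ211' = p ∘ λ211 ∘ (i,i)`. -/
def tl211 : MMap L' L' 2 2 := fc1 2 p (fc2 2 A.l211 i i)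

/-- Transferred `λ31'`. -/
def tl31 : MMap L' L' 3 2 :=
  fc1 2 p (fc3 2 A.l31 i i i) - fc1 2 p (fc3 2 (pc 2 0 1 A.l2 (hl21 A h)) i i i)

/-- Transferred `λ32'`. -/
def tl32 : MMap L' L' 3 2 :=
  fc1 2 p (fc3 2 A.l32 i i i)
  + fc1 2 p (fc3 2 (pc 2 0 1 A.l21 (hl2 A h) + pc 2 1 0 A.l2 (hl21 A h)
      + pa (P12 3) (pc 2 1 0 A.l21 (hl2 A h))) i i i)

/-- Extension of `i`: `i₂ = -h ∘ λ2 ∘ (i,i)`. -/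
def ti2 : MMap L' L 2 1 := - fc1 1 h (fc2 0 A.l2 i i)

/-- Extension of `i`: `i₂₁ = -h ∘ λ21 ∘ (i,i)`. -/
def ti21 : MMap L' L 2 2 := - fc1 2 h (fc2 1 A.l21 i i)

/-- Extension of `i`: `i₃`. -/
def ti3 : MMap L' L 3 2 :=
  - fc1 2 h (fc3 1 A.l3 i i i)
  - fc1 2 h (fc3 1 (pc 1 0 1 A.l2 (hl2 A h)
      - (pc 1 1 0 A.l2 (hl2 A h) - pa (P12 3) (pc 1 1 0 A.l2 (hl2 A h)))) i i i)

end Transfer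

section Skew

variable (k : Type) [CommRing k] [Invertible (2 : k)] [Invertible (3 : k)]
variable {L M : ℤ → Type} [∀ i, AddCommGroup (L i)] [∀ i, Module k (L i)]
  [∀ i, AddCommGroup (M i)] [∀ i, Module k (M i)]

/-- Skew-symmetrization `λ̄2` of a weak Lie 3-algebra. -/
def skew2 (A : WeakLie3 k L) : MMap L L 2 0 :=
  (⅟ (2 : k)) • ∑ σ : Equiv.Perm (Fin 2), (Equiv.Perm.sign σ : ℤ) • pa σ A.l2

/-- Skew-symmetrization `λ̄3` of a weak Lie 3-algebra. -/
def skew3 (A : WeakLie3 k L) : MMap L L 3 1 :=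
  (⅟ (2 : k) * ⅟ (3 : k)) • ∑ σ : Equiv.Perm (Fin 3), (Equiv.Perm.sign σ : ℤ) • pa σ A.l3
  - (⅟ (2 : k) * ⅟ (2 : k) * ⅟ (2 : k) * ⅟ (3 : k)) •
      ∑ σ : Equiv.Perm (Fin 3), (Equiv.Perm.sign σ : ℤ) •
        pa σ (pc 1 0 1 A.l21 A.l2 + pc 1 1 0 A.l21 A.l2)

/-- Skew-symmetrization `λ̄4` of a weak Lie 3-algebra. -/
def skew4 (A : WeakLie3 k L) : MMap L L 4 2 :=
  (⅟ (2 : k) * ⅟ (2 : k) * ⅟ (2 : k) * ⅟ (3 : k)) •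
      ∑ σ : Equiv.Perm (Fin 4), (Equiv.Perm.sign σ : ℤ) • pa σ A.l4
  + (⅟ (2 : k) * ⅟ (2 : k) * ⅟ (2 : k) * ⅟ (2 : k) * ⅟ (3 : k)) •
      ∑ σ : Equiv.Perm (Fin 4), (Equiv.Perm.sign σ : ℤ) •
        pa σ (pc 2 0 1 A.l21 A.l3 - pc 2 0 2 A.l31 A.l2 + pc 2 1 1 A.l32 A.l2
          - pc 2 1 0 A.l21 A.l3 - pc 2 1 1 A.l31 A.l2 + pc 2 2 0 A.l32 A.l2)

/-- Skew-symmetrization `f̄2` of the second component of a weak morphism. -/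
def skewMor2 (f2 : MMap L M 2 1) : MMap L M 2 1 :=
  (⅟ (2 : k)) • ∑ σ : Equiv.Perm (Fin 2), (Equiv.Perm.sign σ : ℤ) • pa σ f2

/-- Skew-symmetrization `f̄3` of the third component of a weak morphism `A → B`. -/
def skewMor3 (A : WeakLie3 k L) (B : WeakLie3 k M) (f1 : MMap L M 1 0) (f2 : MMap L M 2 1)
    (f21 : MMap L M 2 2) (f3 : MMap L M 3 2) : MMap L M 3 2 :=
  (⅟ (2 : k) * ⅟ (3 : k)) • ∑ σ : Equiv.Perm (Fin 3), (Equiv.Perm.sign σ : ℤ) • pa σ f3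
  - (⅟ (2 : k) * ⅟ (2 : k) * ⅟ (2 : k) * ⅟ (3 : k)) •
      ∑ σ : Equiv.Perm (Fin 3), (Equiv.Perm.sign σ : ℤ) •
        pa σ (pc 2 0 1 f21 A.l2 + pc 2 1 0 f21 A.l2
          - fc2 2 B.l21 f2 f1 - fc2 2 B.l21 f1 f2)

end Skew

section Comp

variable {k : Type} [CommRing k] {L M N : ℤ → Type}
  [∀ i, AddCommGroup (L i)] [∀ i, Module k (L i)]
  [∀ i, AddCommGroup (M i)] [∀ i, Module k (M i)]
  [∀ i, AddCommGroup (N i)] [∀ i, Module k (N i)]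

/-- First component of the composition of weak morphisms. -/
def cmp1 (f1' : MMap M N 1 0) (f1 : MMap L M 1 0) : MMap L N 1 0 := fc1 0 f1' f1

/-- Second component of the composition of weak morphisms. -/
def cmp2 (f1' : MMap M N 1 0) (f2' : MMap M N 2 1) (f1 : MMap L M 1 0) (f2 : MMap L M 2 1) :
    MMap L N 2 1 := fc2 1 f2' f1 f1 + fc1 1 f1' f2

/-- `(f'∘f)21` component of the composition of weak morphisms. -/
def cmp21 (f1' : MMap M N 1 0) (f21' : MMap M N 2 2) (f1 : MMap L M 1 0)
    (f21 : MMap L M 2 2) : MMap L N 2 2 := fc2 2 f21' f1 f1 + fc1 2 f1' f21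

/-- Third component of the composition of weak morphisms. -/
def cmp3 (f1' : MMap M N 1 0) (f2' : MMap M N 2 1) (f3' : MMap M N 3 2)
    (f1 : MMap L M 1 0) (f2 : MMap L M 2 1) (f3 : MMap L M 3 2) : MMap L N 3 2 :=
  fc3 2 f3' f1 f1 f1 - fc2 2 f2' f2 f1 + fc2 2 f2' f1 f2 - pa (P12 3) (fc2 2 f2' f1 f2)
    + fc1 2 f1' f3

end Comp

end WL3
namespace WL3

/-! ## The 3-term complex associated to a CLWX 2-algebroid -/

/-- The graded object with `E0` in degree 0, `E1` in degree 1, `R` in degree 2. -/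
def cl (R E0 E1 : Type) : ℤ → Type
  | .ofNat 0 => E0
  | .ofNat 1 => E1
  | .ofNat 2 => R
  | .ofNat (_ + 3) => PUnit
  | .negSucc _ => PUnit

section clinst
variable (R E0 E1 : Type) [AddCommGroup R] [AddCommGroup E0] [AddCommGroup E1]

instance clACG : ∀ i : ℤ, AddCommGroup (cl R E0 E1 i)
  | .ofNat 0 => inferInstanceAs (AddCommGroup E0)
  | .ofNat 1 => inferInstanceAs (AddCommGroup E1)
  | .ofNat 2 => inferInstanceAs (AddCommGroup R)
  | .ofNat (_ + 3) => inferInstanceAs (AddCommGroup PUnit)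
  | .negSucc _ => inferInstanceAs (AddCommGroup PUnit)

variable (k : Type) [CommRing k] [Module k R] [Module k E0] [Module k E1]

instance clMod : ∀ i : ℤ, Module k (cl R E0 E1 i)
  | .ofNat 0 => inferInstanceAs (Module k E0)
  | .ofNat 1 => inferInstanceAs (Module k E1)
  | .ofNat 2 => inferInstanceAs (Module k R)
  | .ofNat (_ + 3) => inferInstanceAs (Module k PUnit)
  | .negSucc _ => inferInstanceAs (Module k PUnit)

end clinst

section clmaps
variable {R E0 E1 : Type}

def getE0 {i : ℤ} (h : i = 0) (v : cl R E0 E1 i) : E0 := by subst h; exact v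
def getE1 {i : ℤ} (h : i = 1) (v : cl R E0 E1 i) : E1 := by subst h; exact v
def getR {i : ℤ} (h : i = 2) (v : cl R E0 E1 i) : R := by subst h; exact v
def put0 {i : ℤ} (h : i = 0) (v : E0) : cl R E0 E1 i := by subst h; exact v
def put1 {i : ℤ} (h : i = 1) (v : E1) : cl R E0 E1 i := by subst h; exact v
def put2 {i : ℤ} (h : i = 2) (v : R) : cl R E0 E1 i := by subst h; exact v

variable [AddCommGroup R] [AddCommGroup E0] [AddCommGroup E1]
variable (k : Type) [CommRing k] [Module k R] [Module k E0] [Module k E1]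

/-- The differential of the complex `E0 ← E1 ← R` as an `MMap`, from `∂` and `D`. -/
def mkD (pd : E1 → E0) (Dm : R → E1) : MMap (cl R E0 E1) (cl R E0 E1) 1 (-1) :=
  fun d x =>
    if h1 : d 0 = 1 then
      put0 (by rw [Fin.sum_univ_one, h1]; norm_num) (pd (getE1 h1 (x 0)))
    else if h2 : d 0 = 2 then
      put1 (by rw [Fin.sum_univ_one, h2]; norm_num) (Dm (getR h2 (x 0)))
    else 0

/-- `λ2` built from `∘` (its components `c00, c01, c10`) and `λ2(x,f) = S(x,Df)`. -/
def mkl2 (c00 : E0 → E0 → E0) (c01 : E0 → E1 → E1) (c10 : E1 → E0 → E1)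
    (S : E0 → E1 → R) (Dm : R → E1) : MMap (cl R E0 E1) (cl R E0 E1) 2 0 :=
  fun d x =>
    if h : d 0 = 0 ∧ d 1 = 0 then
      put0 (by rw [Fin.sum_univ_two, h.1, h.2]; norm_num)
        (c00 (getE0 h.1 (x 0)) (getE0 h.2 (x 1)))
    else if h : d 0 = 0 ∧ d 1 = 1 then
      put1 (by rw [Fin.sum_univ_two, h.1, h.2]; norm_num)
        (c01 (getE0 h.1 (x 0)) (getE1 h.2 (x 1)))
    else if h : d 0 = 1 ∧ d 1 = 0 then
      put1 (by rw [Fin.sum_univ_two, h.1, h.2]; norm_num)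
        (c10 (getE1 h.1 (x 0)) (getE0 h.2 (x 1)))
    else if h : d 0 = 0 ∧ d 1 = 2 then
      put2 (by rw [Fin.sum_univ_two, h.1, h.2]; norm_num)
        (S (getE0 h.1 (x 0)) (Dm (getR h.2 (x 1))))
    else 0

/-- `λ21` built from the pairing `S` (symmetrically on `E0 ⊗ E1` and `E1 ⊗ E0`). -/
def mkl21 (S : E0 → E1 → R) : MMap (cl R E0 E1) (cl R E0 E1) 2 1 :=
  fun d x =>
    if h : d 0 = 0 ∧ d 1 = 1 then
      put2 (by rw [Fin.sum_univ_two, h.1, h.2]; norm_num)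
        (S (getE0 h.1 (x 0)) (getE1 h.2 (x 1)))
    else if h : d 0 = 1 ∧ d 1 = 0 then
      put2 (by rw [Fin.sum_univ_two, h.1, h.2]; norm_num)
        (S (getE0 h.2 (x 1)) (getE1 h.1 (x 0)))
    else 0

/-- `λ3` built from `Ω` on `E0 ⊗ E0 ⊗ E0`. -/
def mkl3 (Om : E0 → E0 → E0 → E1) : MMap (cl R E0 E1) (cl R E0 E1) 3 1 :=
  fun d x =>
    if h : d 0 = 0 ∧ d 1 = 0 ∧ d 2 = 0 then
      put1 (by rw [Fin.sum_univ_three, h.1, h.2.1, h.2.2]; norm_num)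
        (Om (getE0 h.1 (x 0)) (getE0 h.2.1 (x 1)) (getE0 h.2.2 (x 2)))
    else 0

end clmaps

end WL3
namespace WL3

/-!
A map between the pieces of `E0 ← E1 ← R` carries its degrees in its type, and compositions
insert transports along equalities of degrees. Inside the total space `E0 × E1 × R` all transports
become identities, and each of `D`, `λ2`, `λ21`, `λ3` is given by one formula that does not mention
degrees. Composition, permutation and differential translate into operations on such formulas, so
an identity of graded maps becomes an identity of functions of homogeneous elements of
`E0 × E1 × R`. It has only a few components that are not zero for degree reasons, and those follow
from the axioms of a CLWX 2-algebroid: beyond (C1), (L1) needs (C3), (C6), (C7) and (C8), (L2)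
needs (C4) and (C7), (W1) needs (C2) and (C3), (W4) needs (C4), and (W11) needs (C5). As
`λ211 = λ31 = λ32 = λ4 = 0`, the remaining identities hold term by term or by the symmetry of `S`
and `Ω`.
-/

section Zero

variable {L M : ℤ → Type} {m m₁ m₂ n : ℕ} {r s T : ℤ} [∀ i, AddCommGroup (M i)]

theorem gcast_zero {i j : ℤ} (h : i = j) : gcast h (0 : M i) = 0 := by
  subst h; rfl

theorem mcast_zero {m' : ℕ} {r' : ℤ} (hm : m = m') (hr : r = r') :
    mcast hm hr (0 : MMap L M m r) = 0 := by
  subst hm hr; rfl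

theorem pa_zero (σ : Equiv.Perm (Fin m)) : pa σ (0 : MMap L M m r) = 0 := by
  funext d x
  simp only [pa, Pi.zero_apply, gcast_zero, smul_zero]

section Left

variable [∀ i, AddCommGroup (L i)]

theorem pcomp_zero_left (ν : MMap L L n s) :
    pcomp m₁ m₂ (0 : MMap L M (m₁ + 1 + m₂) r) ν = 0 := by
  funext d x
  simp only [pcomp, Pi.zero_apply, gcast_zero, smul_zero]

theorem pc_zero_left (ν : MMap L L n s) (h : r + s = T) :
    pc T m₁ m₂ (0 : MMap L M (m₁ + 1 + m₂) r) ν h = 0 := by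
  rw [pc, pcomp_zero_left, mcast_zero]

end Left

namespace IsMultilinear

variable {k : Type} [CommRing k] [∀ i, Module k (M i)]

theorem comp₁_zero_right {D : MMap M M 1 r} (hD : IsMultilinear k D) :
    comp₁ D (0 : MMap L M m s) = 0 := by
  funext d x
  have hzero : D (fun _ => s + ∑ j, d j) (fun _ => 0) = 0 := by
    simpa only [zero_smul, Function.update_eq_self] using
      (hD (fun _ => s + ∑ j, d j) (fun _ => 0) 0).2 0 0
  simp only [comp₁, Pi.zero_apply, hzero, gcast_zero]

variable [∀ i, AddCommGroup (L i)]

theorem bd_zero {D' : MMap M M 1 (-1)} (hD' : IsMultilinear k D') (D : MMap L L 1 (-1))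
    (h : -1 + r = T) : bd T D' D (0 : MMap L M m r) h = 0 := by
  simp only [bd, bdry, hD'.comp₁_zero_right, mcast_zero, pcomp_zero_left, Finset.sum_const_zero,
    smul_zero, sub_zero]

variable [∀ i, Module k (L i)]

theorem zero : IsMultilinear k (0 : MMap L M m r) :=
  fun _ _ _ => ⟨fun _ _ => (add_zero _).symm, fun c _ => (smul_zero c).symm⟩

theorem map_eq_zero {μ : MMap L M m r} (hμ : IsMultilinear k μ) {d : Fin m → ℤ}
    {x : ∀ j, L (d j)} (j : Fin m) (hx : x j = 0) : μ d x = 0 := by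
  simpa only [zero_smul, ← hx, Function.update_eq_self] using (hμ d x j).2 0 (x j)

theorem pc_zero_right {μ : MMap L M (m₁ + 1 + m₂) r} (hμ : IsMultilinear k μ) (h : r + s = T) :
    pc T m₁ m₂ μ (0 : MMap L L n s) h = 0 := by
  suffices hcomp : pcomp m₁ m₂ μ (0 : MMap L L n s) = 0 by rw [pc, hcomp, mcast_zero]
  funext d x
  rw [pcomp, hμ.map_eq_zero (Fin.castAdd m₂ (Fin.natAdd m₁ 0)), gcast_zero, smul_zero,
    Pi.zero_apply, Pi.zero_apply]
  simp only [Fin.addCases_left, Fin.addCases_right, Pi.zero_apply, gcast_zero]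

end IsMultilinear

end Zero

/-! ### Evaluation in the total space -/

section TotalSpace

variable {R E0 E1 : Type} [AddCommGroup R] [AddCommGroup E0] [AddCommGroup E1]

theorem cl_eq_zero : ∀ i : ℤ, (i < 0 ∨ 2 < i) → ∀ x : cl R E0 E1 i, x = 0
  | .ofNat 0, h, _ => absurd h (by decide)
  | .ofNat 1, h, _ => absurd h (by decide)
  | .ofNat 2, h, _ => absurd h (by decide)
  | .ofNat (_ + 3), _, _ => rfl
  | .negSucc _, _, _ => rfl

/-- The elements of the total space `E0 × E1 × R` of `E0 ← E1 ← R` that are homogeneous of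
degree `i`; zero is homogeneous of every degree. -/
def IsHomog (i : ℤ) (t : E0 × E1 × R) : Prop :=
  t = 0 ∨ (i = 0 ∧ ∃ x, t = (x, 0, 0)) ∨ (i = 1 ∧ ∃ a, t = (0, a, 0)) ∨
    (i = 2 ∧ ∃ f, t = (0, 0, f))

namespace IsHomog

theorem zero_mk (x : E0) : IsHomog 0 ((x, 0, 0) : E0 × E1 × R) := .inr (.inl ⟨rfl, x, rfl⟩)

theorem one_mk (a : E1) : IsHomog 1 ((0, a, 0) : E0 × E1 × R) := .inr (.inr (.inl ⟨rfl, a, rfl⟩))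

theorem two_mk (f : R) : IsHomog 2 ((0, 0, f) : E0 × E1 × R) := .inr (.inr (.inr ⟨rfl, f, rfl⟩))

theorem fst_eq_zero {i : ℤ} {t : E0 × E1 × R} (h : IsHomog i t) (hi : i ≠ 0) : t.1 = 0 := by
  rcases h with rfl | ⟨h, -⟩ | ⟨-, a, rfl⟩ | ⟨-, f, rfl⟩
  · rfl
  · exact absurd h hi
  · rfl
  · rfl

end IsHomog

variable (k : Type) [CommRing k] [Module k R] [Module k E0] [Module k E1]

/-- The inclusion of the degree `i` part of `E0 ← E1 ← R` into the total space. -/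
def emb : ∀ i : ℤ, cl R E0 E1 i →ₗ[k] E0 × E1 × R
  | .ofNat 0 => LinearMap.inl k E0 (E1 × R)
  | .ofNat 1 => LinearMap.inr k E0 (E1 × R) ∘ₗ LinearMap.inl k E1 R
  | .ofNat 2 => LinearMap.inr k E0 (E1 × R) ∘ₗ LinearMap.inr k E1 R
  | .ofNat (_ + 3) => 0
  | .negSucc _ => 0

theorem emb_injective : ∀ i : ℤ, Function.Injective (emb (R := R) (E0 := E0) (E1 := E1) k i)
  | .ofNat 0 => fun _ _ h => congrArg Prod.fst h
  | .ofNat 1 => fun _ _ h => congrArg (fun t : E0 × E1 × R => t.2.1) h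
  | .ofNat 2 => fun _ _ h => congrArg (fun t : E0 × E1 × R => t.2.2) h
  | .ofNat (_ + 3) => fun _ _ _ => rfl
  | .negSucc _ => fun _ _ _ => rfl

theorem emb_put0 {i : ℤ} (h : i = 0) (v : E0) :
    emb k i (put0 (R := R) (E1 := E1) h v) = (v, 0, 0) := by
  subst h; rfl

theorem emb_put1 {i : ℤ} (h : i = 1) (v : E1) :
    emb k i (put1 (R := R) (E0 := E0) h v) = (0, v, 0) := by
  subst h; rfl

theorem emb_put2 {i : ℤ} (h : i = 2) (v : R) :
    emb k i (put2 (E0 := E0) (E1 := E1) h v) = (0, 0, v) := by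
  subst h; rfl

theorem emb_of_eq_zero {i : ℤ} (h : i = 0) (v : cl R E0 E1 i) :
    emb k i v = (getE0 h v, 0, 0) := by
  subst h; rfl

theorem emb_of_eq_one {i : ℤ} (h : i = 1) (v : cl R E0 E1 i) :
    emb k i v = (0, getE1 h v, 0) := by
  subst h; rfl

theorem emb_of_eq_two {i : ℤ} (h : i = 2) (v : cl R E0 E1 i) :
    emb k i v = (0, 0, getR h v) := by
  subst h; rfl

theorem emb_gcast {i j : ℤ} (h : i = j) (v : cl R E0 E1 i) :
    emb k j (gcast h v) = emb k i v := by
  subst h; rfl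

theorem isHomog_emb : ∀ (i : ℤ) (v : cl R E0 E1 i), IsHomog i (emb k i v)
  | .ofNat 0, v => .zero_mk (E0 := E0) v
  | .ofNat 1, v => .one_mk (E1 := E1) v
  | .ofNat 2, v => .two_mk (R := R) v
  | .ofNat (_ + 3), _ => .inl rfl
  | .negSucc _, _ => .inl rfl

theorem IsHomog.exists_emb {i : ℤ} {t : E0 × E1 × R} (h : IsHomog i t) : ∃ v, emb k i v = t := by
  rcases h with rfl | ⟨rfl, x, rfl⟩ | ⟨rfl, a, rfl⟩ | ⟨rfl, f, rfl⟩
  · exact ⟨0, map_zero _⟩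
  · exact ⟨x, rfl⟩
  · exact ⟨a, rfl⟩
  · exact ⟨f, rfl⟩

/-- The arguments fed to the outer map of a partial composition `μ ∘_{m₁+1} ν` whose inner map
takes the value `y`. -/
def outArg {V : Type} (m₁ m₂ n : ℕ) (y : V) (x : Fin (m₁ + n + m₂) → V) : Fin (m₁ + 1 + m₂) → V :=
  Fin.append (Fin.append (fun j => x (Fin.castAdd m₂ (Fin.castAdd n j))) fun _ : Fin 1 => y)
    fun j => x (Fin.natAdd (m₁ + n) j)

theorem outArg_left {V : Type} (m₁ m₂ n : ℕ) (y : V) (x : Fin (m₁ + n + m₂) → V) (j : Fin m₁) :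
    outArg m₁ m₂ n y x (Fin.castAdd m₂ (Fin.castAdd 1 j)) =
      x (Fin.castAdd m₂ (Fin.castAdd n j)) := by
  simp only [outArg, Fin.append_left]

theorem outArg_mid {V : Type} (m₁ m₂ n : ℕ) (y : V) (x : Fin (m₁ + n + m₂) → V) (j : Fin 1) :
    outArg m₁ m₂ n y x (Fin.castAdd m₂ (Fin.natAdd m₁ j)) = y := by
  simp only [outArg, Fin.append_left, Fin.append_right]

theorem outArg_right {V : Type} (m₁ m₂ n : ℕ) (y : V) (x : Fin (m₁ + n + m₂) → V) (j : Fin m₂) :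
    outArg m₁ m₂ n y x (Fin.natAdd (m₁ + 1) j) = x (Fin.natAdd (m₁ + n) j) := by
  simp only [outArg, Fin.append_right]

theorem outArg_cast {V : Type} {m m₁ m₂ : ℕ} (h : m₁ + 1 + m₂ = m) (y : V) (x : Fin m → V)
    (j : Fin (m₁ + 1 + m₂)) :
    outArg m₁ m₂ 1 y (fun j => x (Fin.cast h j)) j =
      Function.update x ⟨m₁, by omega⟩ y (Fin.cast h j) := by
  subst h
  have hmid (j : Fin 1) : Fin.castAdd m₂ (Fin.natAdd m₁ j) = ⟨m₁, by omega⟩ :=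
    Fin.ext (by simp)
  refine Fin.addCases (fun j' => Fin.addCases (fun j₁ => ?left) (fun j₀ => ?mid) j')
    (fun j₃ => ?right) j
  case left =>
    rw [outArg_left, Function.update_of_ne (Fin.ne_of_val_ne j₁.isLt.ne)]
  case mid => rw [outArg_mid, Fin.cast_eq_self, hmid, Function.update_self]
  case right =>
    rw [outArg_right, Function.update_of_ne (Fin.ne_of_val_ne (by simp; omega))]

/-- `F` computes the graded map `μ` in the total space. The degrees are arguments of `F` because
they enter through Koszul signs. -/
def Computes {m : ℕ} {r : ℤ} (μ : MMap (cl R E0 E1) (cl R E0 E1) m r)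
    (F : (Fin m → ℤ) → (Fin m → E0 × E1 × R) → E0 × E1 × R) : Prop :=
  ∀ d x, emb k _ (μ d x) = F d (fun j => emb k _ (x j))

namespace Computes

variable {k} {m n : ℕ} {r s : ℤ} {μ ν : MMap (cl R E0 E1) (cl R E0 E1) m r}
  {F G : (Fin m → ℤ) → (Fin m → E0 × E1 × R) → E0 × E1 × R}

theorem eq_iff (hμ : Computes k μ F) (hν : Computes k ν G) :
    μ = ν ↔ ∀ d x, (∀ j, IsHomog (d j) (x j)) → F d x = G d x := by
  refine ⟨?_, fun h => funext₂ fun d x => emb_injective k _ ?_⟩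
  · rintro rfl d x hx
    choose v hv using fun j => (hx j).exists_emb k
    obtain rfl : (fun j => emb k _ (v j)) = x := funext hv
    rw [← hμ, ← hν]
  · rw [hμ, hν]
    exact h _ _ fun j => isHomog_emb k _ _

theorem zero : Computes k (0 : MMap (cl R E0 E1) (cl R E0 E1) m r) fun _ _ => 0 :=
  fun _ _ => map_zero _

theorem add (hμ : Computes k μ F) (hν : Computes k ν G) :
    Computes k (μ + ν) fun d x => F d x + G d x :=
  fun d x => (map_add _ _ _).trans (congrArg₂ _ (hμ d x) (hν d x))

theorem sub (hμ : Computes k μ F) (hν : Computes k ν G) :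
    Computes k (μ - ν) fun d x => F d x - G d x :=
  fun d x => (map_sub _ _ _).trans (congrArg₂ _ (hμ d x) (hν d x))

theorem zsmul (c : ℤ) (hμ : Computes k μ F) : Computes k (c • μ) fun d x => c • F d x :=
  fun d x => (map_zsmul _ _ _).trans (congrArg _ (hμ d x))

theorem sum {ι : Type} (t : Finset ι) {μ : ι → MMap (cl R E0 E1) (cl R E0 E1) m r}
    {F : ι → (Fin m → ℤ) → (Fin m → E0 × E1 × R) → E0 × E1 × R}
    (h : ∀ p, Computes k (μ p) (F p)) :
    Computes k (∑ p ∈ t, μ p) fun d x => ∑ p ∈ t, F p d x := fun d x => by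
  rw [Finset.sum_apply, Finset.sum_apply, map_sum]
  exact Finset.sum_congr rfl fun p _ => h p d x

theorem mcast {m' : ℕ} {r' : ℤ} (hm : m = m') (hr : r = r') (hμ : Computes k μ F) :
    Computes k (mcast hm hr μ) fun d x =>
      F (fun j => d (Fin.cast hm j)) (fun j => x (Fin.cast hm j)) := by
  subst hm hr; exact hμ

theorem pa (σ : Equiv.Perm (Fin m)) (hμ : Computes k μ F) :
    Computes k (pa σ μ) fun d x => koszulSign d σ • F (d ∘ σ.symm) (x ∘ σ.symm) := fun d x => by
  rw [WL3.pa, map_zsmul, emb_gcast, hμ]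
  rfl

theorem isMultilinear {F : (Fin m → E0 × E1 × R) → E0 × E1 × R} (hμ : Computes k μ fun _ => F)
    (hadd : ∀ x j a b, F (Function.update x j (a + b)) =
      F (Function.update x j a) + F (Function.update x j b))
    (hsmul : ∀ x j (c : k) a, F (Function.update x j (c • a)) = c • F (Function.update x j a)) :
    IsMultilinear k μ := by
  intro d x j
  have emb_update (a) : (fun i => emb k _ (Function.update x j a i)) =
      Function.update (fun i => emb k _ (x i)) j (emb k _ a) :=
    funext fun i => Function.apply_update (fun i => emb k (d i)) x j a i
  refine ⟨fun a b => emb_injective k _ ?_, fun c a => emb_injective k _ ?_⟩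
  · simp only [map_add, hμ _ _, emb_update, hadd]
  · simp only [map_smul, hμ _ _, emb_update, hsmul]

section Composition

variable {P : (Fin 1 → E0 × E1 × R) → E0 × E1 × R}

theorem comp₁ {D : MMap (cl R E0 E1) (cl R E0 E1) 1 s} (hD : Computes k D fun _ => P)
    (hμ : Computes k μ F) : Computes k (comp₁ D μ) fun d x => P ![F d x] := fun d x => by
  rw [WL3.comp₁, emb_gcast, hD]
  exact congrArg P (funext fun j => by rw [Subsingleton.elim j 0]; exact hμ d x)

theorem fc1 (T : ℤ) {D : MMap (cl R E0 E1) (cl R E0 E1) 1 s} (h : s + r = T)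
    (hD : Computes k D fun _ => P) (hμ : Computes k μ F) :
    Computes k (fc1 T D μ h) fun d x => P ![F d x] :=
  (comp₁ hD hμ).mcast rfl h

theorem pcomp (m₁ m₂ : ℕ) {μ : MMap (cl R E0 E1) (cl R E0 E1) (m₁ + 1 + m₂) r}
    {ν : MMap (cl R E0 E1) (cl R E0 E1) n s}
    {F : (Fin (m₁ + 1 + m₂) → E0 × E1 × R) → E0 × E1 × R}
    {G : (Fin n → E0 × E1 × R) → E0 × E1 × R}
    (hμ : Computes k μ fun _ => F) (hν : Computes k ν fun _ => G) :
    Computes k (pcomp m₁ m₂ μ ν) fun d x =>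
      ((-1 : ℤ) ^ (s * ∑ j : Fin m₁, d (Fin.castAdd m₂ (Fin.castAdd n j))).natAbs) •
        F (outArg m₁ m₂ n (G fun j => x (Fin.castAdd m₂ (Fin.natAdd m₁ j))) x) := fun d x => by
  rw [WL3.pcomp, map_zsmul, emb_gcast, hμ (outDeg m₁ m₂ n s d)]
  refine congrArg _ (congrArg F (funext fun j => ?_))
  refine Fin.addCases (fun j' => Fin.addCases (fun j₁ => ?left) (fun j₀ => ?mid) j')
    (fun j₃ => ?right) j
  case left => simp only [Fin.addCases_left, emb_gcast, outArg_left]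
  case mid => simp only [Fin.addCases_left, Fin.addCases_right, emb_gcast, outArg_mid, hν _ _]
  case right => simp only [Fin.addCases_right, emb_gcast, outArg_right]

theorem pc (T : ℤ) (m₁ m₂ : ℕ) {μ : MMap (cl R E0 E1) (cl R E0 E1) (m₁ + 1 + m₂) r}
    {ν : MMap (cl R E0 E1) (cl R E0 E1) n s}
    {F : (Fin (m₁ + 1 + m₂) → E0 × E1 × R) → E0 × E1 × R}
    {G : (Fin n → E0 × E1 × R) → E0 × E1 × R} (h : r + s = T)
    (hμ : Computes k μ fun _ => F) (hν : Computes k ν fun _ => G) :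
    Computes k (pc T m₁ m₂ μ ν h) fun d x =>
      ((-1 : ℤ) ^ (s * ∑ j : Fin m₁, d (Fin.castAdd m₂ (Fin.castAdd n j))).natAbs) •
        F (outArg m₁ m₂ n (G fun j => x (Fin.castAdd m₂ (Fin.natAdd m₁ j))) x) :=
  (pcomp m₁ m₂ hμ hν).mcast rfl h

theorem pc_eq_zero {m₁ m₂ : ℕ} {T : ℤ} {μ : MMap (cl R E0 E1) (cl R E0 E1) (m₁ + 1 + m₂) r}
    {ν : MMap (cl R E0 E1) (cl R E0 E1) n s}
    {F : (Fin (m₁ + 1 + m₂) → E0 × E1 × R) → E0 × E1 × R}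
    {G : (Fin n → E0 × E1 × R) → E0 × E1 × R} (h : r + s = T)
    (hμ : Computes k μ fun _ => F) (hν : Computes k ν fun _ => G)
    (hFG : ∀ x y, F (outArg m₁ m₂ n (G y) x) = 0) : WL3.pc T m₁ m₂ μ ν h = 0 :=
  ((pc T m₁ m₂ h hμ hν).eq_iff .zero).2 fun d x _ => by rw [hFG, smul_zero]

theorem pcomp_D {m₁ m₂ : ℕ} (h : m₁ + 1 + m₂ = m) (h' : m = m₁ + 1 + m₂) (hr : r + -1 = -1 + r)
    {D : MMap (cl R E0 E1) (cl R E0 E1) 1 (-1)} {F : (Fin m → E0 × E1 × R) → E0 × E1 × R}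
    (hμ : Computes k μ fun _ => F) (hD : Computes k D fun _ => P) :
    Computes k (WL3.mcast h hr (WL3.pcomp m₁ m₂ (WL3.mcast h' rfl μ) D)) fun d x =>
      ((-1 : ℤ) ^ (∑ j : Fin m₁, d (Fin.castLE (by omega) j)).natAbs) •
        F (Function.update x ⟨m₁, by omega⟩ (P ![x ⟨m₁, by omega⟩])) := by
  subst h
  intro d x
  refine (mcast rfl hr (pcomp m₁ m₂ hμ hD) d x).trans ?_
  simp only [neg_mul, one_mul, Int.natAbs_neg]
  refine congrArg₂ _ rfl (congrArg F (funext fun j => ?_))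
  refine (outArg_cast rfl _ (fun j => emb k _ (x j)) j).trans ?_
  refine congrArg (fun z => Function.update (fun j => emb k _ (x j)) ⟨m₁, by omega⟩ (P z) j)
    (funext fun i => ?_)
  rw [Subsingleton.elim i 0]
  rfl

theorem bd (T : ℤ) {D : MMap (cl R E0 E1) (cl R E0 E1) 1 (-1)}
    {F : (Fin m → E0 × E1 × R) → E0 × E1 × R}
    (h : -1 + r = T) (hD : Computes k D fun _ => P) (hμ : Computes k μ fun _ => F) :
    Computes k (bd T D D μ h) fun d x =>
      P ![F x] - ((-1 : ℤ) ^ r.natAbs) • ∑ p : Fin m,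
        ((-1 : ℤ) ^ (∑ j : Fin p.val, d (Fin.castLE p.isLt.le j)).natAbs) •
          F (Function.update x p (P ![x p])) :=
  mcast rfl h (sub (comp₁ hD hμ) (zsmul _ (sum Finset.univ fun p =>
    pcomp_D (by have := p.isLt; omega) _ _ hμ hD)))

end Composition

end Computes

end TotalSpace

section LeibnizTwo

variable {L : ℤ → Type} [∀ i, AddCommGroup (L i)]

/-- The right-hand side of (L2), the failure of `λ2` to satisfy the Leibniz identity. -/
def leibnizDefect (l2 : MMap L L 2 0) : MMap L L 3 0 :=
  pc 0 1 0 l2 l2 - pc 0 0 1 l2 l2 - pa (P12 3) (pc 0 1 0 l2 l2)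

/-- The right-hand side of (L3). -/
def coherenceDefect (l2 : MMap L L 2 0) (l3 : MMap L L 3 1) : MMap L L 4 1 :=
  pc 1 0 1 l2 l3 + pc 1 1 0 l2 l3 - pa (P12 4) (pc 1 1 0 l2 l3)
    + pa (P123 4) (pc 1 1 0 l2 l3) - pc 1 0 2 l3 l2
    + pc 1 1 1 l3 l2 - pa (P12 4) (pc 1 1 1 l3 l2)
    - pc 1 2 0 l3 l2 + pa (P23 4) (pc 1 2 0 l3 l2) - pa (P132 4) (pc 1 2 0 l3 l2)

/-- The identities (L1)–(L3) with `λ4 = 0`, which define Leibniz 2-algebras. -/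
structure IsLeibniz2 (D : MMap L L 1 (-1)) (l2 : MMap L L 2 0) (l3 : MMap L L 3 1) : Prop where
  chain : bd (-1) D D l2 = 0
  leibniz : bd 0 D D l3 = leibnizDefect l2
  coherence : 0 = coherenceDefect l2 l3

end LeibnizTwo

section Formulas

variable {R E0 E1 : Type} [AddCommGroup R] [AddCommGroup E0] [AddCommGroup E1]
  {k : Type} [CommRing k] [Module k R] [Module k E0] [Module k E1]

namespace Computes

theorem congr {m : ℕ} {r : ℤ} {μ : MMap (cl R E0 E1) (cl R E0 E1) m r}
    {F G : (Fin m → ℤ) → (Fin m → E0 × E1 × R) → E0 × E1 × R} (hμ : Computes k μ F)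
    (hFG : ∀ d x, F d x = G d x) : Computes k μ G :=
  fun d x => (hμ d x).trans (hFG _ _)

variable {r s T : ℤ}

section Binary

variable {μ : MMap (cl R E0 E1) (cl R E0 E1) 2 r} {F : (Fin 2 → E0 × E1 × R) → E0 × E1 × R}

theorem pa_P12_two (hμ : Computes k μ fun _ => F) :
    Computes k (WL3.pa (P12 2) μ) fun d x => koszulSign d (P12 2) • F ![x 1, x 0] :=
  (hμ.pa (P12 2)).congr fun _ _ => congrArg _ <| congrArg F (FinVec.etaExpand_eq _).symm

theorem bd_two {D : MMap (cl R E0 E1) (cl R E0 E1) 1 (-1)}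
    {P : (Fin 1 → E0 × E1 × R) → E0 × E1 × R} (h : -1 + r = T) (hD : Computes k D fun _ => P)
    (hμ : Computes k μ fun _ => F) :
    Computes k (WL3.bd T D D μ h) fun d x =>
      P ![F x] - (-1 : ℤ) ^ r.natAbs •
        (F ![P ![x 0], x 1] + (-1 : ℤ) ^ (d 0).natAbs • F ![x 0, P ![x 1]]) :=
  (Computes.bd T h hD hμ).congr fun d x => by
    have hx₀ : Function.update x 0 (P ![x 0]) = ![P ![x 0], x 1] := (FinVec.etaExpand_eq _).symm
    have hx₁ : Function.update x 1 (P ![x 1]) = ![x 0, P ![x 1]] := (FinVec.etaExpand_eq _).symm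
    have hd : ∑ j : Fin 1, d (Fin.castLE one_le_two j) = d 0 := Fin.sum_univ_one _
    rw [Fin.sum_univ_two, hx₀, hx₁, ← hd]
    exact congrArg _ (congrArg _ (congrArg₂ _ (one_smul _ _) rfl))

section BinaryInner

variable {ν : MMap (cl R E0 E1) (cl R E0 E1) 2 s} {G : (Fin 2 → E0 × E1 × R) → E0 × E1 × R}

theorem pc_two_two_left (h : r + s = T) (hμ : Computes k μ fun _ => F)
    (hν : Computes k ν fun _ => G) :
    Computes k (WL3.pc T 0 1 μ ν h) fun _ x => F ![G ![x 0, x 1], x 2] :=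
  (hμ.pc T 0 1 h hν).congr fun d x => by
    rw [Finset.univ_eq_empty, Finset.sum_empty, mul_zero, Int.natAbs_zero, pow_zero, one_smul]
    exact congrArg F <| funext <| Fin.forall_fin_two.2
      ⟨congrArg G (FinVec.etaExpand_eq _).symm, rfl⟩

theorem pc_two_two_right (h : r + s = T) (hμ : Computes k μ fun _ => F)
    (hν : Computes k ν fun _ => G) :
    Computes k (WL3.pc T 1 0 μ ν h) fun d x =>
      (-1 : ℤ) ^ (s * d 0).natAbs • F ![x 0, G ![x 1, x 2]] :=
  (hμ.pc T 1 0 h hν).congr fun d x => by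
    rw [Fin.sum_univ_one]
    exact congrArg _ <| congrArg F <| funext <| Fin.forall_fin_two.2
      ⟨rfl, congrArg G (FinVec.etaExpand_eq _).symm⟩

end BinaryInner

section TernaryInner

variable {ν : MMap (cl R E0 E1) (cl R E0 E1) 3 s} {G : (Fin 3 → E0 × E1 × R) → E0 × E1 × R}

theorem pc_two_three_left (h : r + s = T) (hμ : Computes k μ fun _ => F)
    (hν : Computes k ν fun _ => G) :
    Computes k (WL3.pc T 0 1 μ ν h) fun _ x => F ![G ![x 0, x 1, x 2], x 3] :=
  (hμ.pc T 0 1 h hν).congr fun d x => by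
    rw [Finset.univ_eq_empty, Finset.sum_empty, mul_zero, Int.natAbs_zero, pow_zero, one_smul]
    exact congrArg F <| funext <| Fin.forall_fin_two.2
      ⟨congrArg G (FinVec.etaExpand_eq _).symm, rfl⟩

theorem pc_two_three_right (h : r + s = T) (hμ : Computes k μ fun _ => F)
    (hν : Computes k ν fun _ => G) :
    Computes k (WL3.pc T 1 0 μ ν h) fun d x =>
      (-1 : ℤ) ^ (s * d 0).natAbs • F ![x 0, G ![x 1, x 2, x 3]] :=
  (hμ.pc T 1 0 h hν).congr fun d x => by
    rw [Fin.sum_univ_one]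
    exact congrArg _ <| congrArg F <| funext <| Fin.forall_fin_two.2
      ⟨rfl, congrArg G (FinVec.etaExpand_eq _).symm⟩

end TernaryInner

end Binary

section Ternary

variable {μ : MMap (cl R E0 E1) (cl R E0 E1) 3 r} {F : (Fin 3 → E0 × E1 × R) → E0 × E1 × R}

theorem pa_P12_three (hμ : Computes k μ fun _ => F) :
    Computes k (WL3.pa (P12 3) μ) fun d x => koszulSign d (P12 3) • F ![x 1, x 0, x 2] :=
  (hμ.pa (P12 3)).congr fun _ _ => congrArg _ <| congrArg F (FinVec.etaExpand_eq _).symm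

theorem pa_P23_three (hμ : Computes k μ fun _ => F) :
    Computes k (WL3.pa (P23 3) μ) fun d x => koszulSign d (P23 3) • F ![x 0, x 2, x 1] :=
  (hμ.pa (P23 3)).congr fun _ _ => congrArg _ <| congrArg F (FinVec.etaExpand_eq _).symm

theorem bd_three {D : MMap (cl R E0 E1) (cl R E0 E1) 1 (-1)}
    {P : (Fin 1 → E0 × E1 × R) → E0 × E1 × R} (h : -1 + r = T) (hD : Computes k D fun _ => P)
    (hμ : Computes k μ fun _ => F) :
    Computes k (WL3.bd T D D μ h) fun d x =>
      P ![F x] - (-1 : ℤ) ^ r.natAbs •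
        (F ![P ![x 0], x 1, x 2] + (-1 : ℤ) ^ (d 0).natAbs • F ![x 0, P ![x 1], x 2]
          + (-1 : ℤ) ^ (d 0 + d 1).natAbs • F ![x 0, x 1, P ![x 2]]) :=
  (Computes.bd T h hD hμ).congr fun d x => by
    have hx₀ : Function.update x 0 (P ![x 0]) = ![P ![x 0], x 1, x 2] :=
      (FinVec.etaExpand_eq _).symm
    have hx₁ : Function.update x 1 (P ![x 1]) = ![x 0, P ![x 1], x 2] :=
      (FinVec.etaExpand_eq _).symm
    have hx₂ : Function.update x 2 (P ![x 2]) = ![x 0, x 1, P ![x 2]] :=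
      (FinVec.etaExpand_eq _).symm
    have hd₁ : ∑ j : Fin 1, d (Fin.castLE (by norm_num) j) = d 0 := Fin.sum_univ_one _
    have hd₂ : ∑ j : Fin 2, d (Fin.castLE (by norm_num) j) = d 0 + d 1 := Fin.sum_univ_two _
    rw [Fin.sum_univ_three, hx₀, hx₁, hx₂, ← hd₂, ← hd₁]
    exact congrArg _ (congrArg _ (congrArg₂ _ (congrArg₂ _ (one_smul _ _) rfl) rfl))

variable {ν : MMap (cl R E0 E1) (cl R E0 E1) 2 s} {G : (Fin 2 → E0 × E1 × R) → E0 × E1 × R}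

theorem pc_three_two_left (h : r + s = T) (hμ : Computes k μ fun _ => F)
    (hν : Computes k ν fun _ => G) :
    Computes k (WL3.pc T 0 2 μ ν h) fun _ x => F ![G ![x 0, x 1], x 2, x 3] :=
  (hμ.pc T 0 2 h hν).congr fun d x => by
    rw [Finset.univ_eq_empty, Finset.sum_empty, mul_zero, Int.natAbs_zero, pow_zero, one_smul]
    exact congrArg F <| funext <| Fin.forall_fin_succ.2
      ⟨congrArg G (FinVec.etaExpand_eq _).symm, Fin.forall_fin_two.2 ⟨rfl, rfl⟩⟩

theorem pc_three_two_mid (h : r + s = T) (hμ : Computes k μ fun _ => F)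
    (hν : Computes k ν fun _ => G) :
    Computes k (WL3.pc T 1 1 μ ν h) fun d x =>
      (-1 : ℤ) ^ (s * d 0).natAbs • F ![x 0, G ![x 1, x 2], x 3] :=
  (hμ.pc T 1 1 h hν).congr fun d x => by
    rw [Fin.sum_univ_one]
    exact congrArg _ <| congrArg F <| funext <| Fin.forall_fin_succ.2
      ⟨rfl, Fin.forall_fin_two.2 ⟨congrArg G (FinVec.etaExpand_eq _).symm, rfl⟩⟩

theorem pc_three_two_right (h : r + s = T) (hμ : Computes k μ fun _ => F)
    (hν : Computes k ν fun _ => G) :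
    Computes k (WL3.pc T 2 0 μ ν h) fun d x =>
      (-1 : ℤ) ^ (s * (d 0 + d 1)).natAbs • F ![x 0, x 1, G ![x 2, x 3]] :=
  (hμ.pc T 2 0 h hν).congr fun d x => by
    rw [Fin.sum_univ_two]
    exact congrArg _ <| congrArg F <| funext <| Fin.forall_fin_succ.2
      ⟨rfl, Fin.forall_fin_two.2 ⟨rfl, congrArg G (FinVec.etaExpand_eq _).symm⟩⟩

end Ternary

variable {l2 : MMap (cl R E0 E1) (cl R E0 E1) 2 0} {F : (Fin 2 → E0 × E1 × R) → E0 × E1 × R}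

theorem leibnizDefect (hF : Computes k l2 fun _ => F) :
    Computes k (leibnizDefect l2) fun d x =>
      F ![x 0, F ![x 1, x 2]] - F ![F ![x 0, x 1], x 2]
        - koszulSign d (P12 3) • F ![x 1, F ![x 0, x 2]] := by
  have right := hF.pc_two_two_right (zero_add 0) hF
  have left := hF.pc_two_two_left (zero_add 0) hF
  refine ((right.sub left).sub (right.pa (P12 3))).congr fun d x => ?_
  simp only [zero_mul, Int.natAbs_zero, pow_zero, one_smul]
  rfl

theorem coherenceDefect {l3 : MMap (cl R E0 E1) (cl R E0 E1) 3 1}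
    {G : (Fin 3 → E0 × E1 × R) → E0 × E1 × R} (hF : Computes k l2 fun _ => F)
    (hG : Computes k l3 fun _ => G) :
    Computes k (coherenceDefect l2 l3) fun d x =>
      F ![G ![x 0, x 1, x 2], x 3]
        + (-1 : ℤ) ^ (d 0).natAbs • F ![x 0, G ![x 1, x 2, x 3]]
        - koszulSign d (P12 4) • (-1 : ℤ) ^ (d 1).natAbs • F ![x 1, G ![x 0, x 2, x 3]]
        + koszulSign d (P123 4) • (-1 : ℤ) ^ (d 2).natAbs • F ![x 2, G ![x 0, x 1, x 3]]
        - G ![F ![x 0, x 1], x 2, x 3] + G ![x 0, F ![x 1, x 2], x 3]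
        - koszulSign d (P12 4) • G ![x 1, F ![x 0, x 2], x 3]
        - G ![x 0, x 1, F ![x 2, x 3]]
        + koszulSign d (P23 4) • G ![x 0, x 2, F ![x 1, x 3]]
        - koszulSign d (P132 4) • G ![x 1, x 2, F ![x 0, x 3]] := by
  have FG₁ := hF.pc_two_three_left (zero_add 1) hG
  have FG₂ := hF.pc_two_three_right (zero_add 1) hG
  have GF₁ := hG.pc_three_two_left (add_zero 1) hF
  have GF₂ := hG.pc_three_two_mid (add_zero 1) hF
  have GF₃ := hG.pc_three_two_right (add_zero 1) hF
  refine (((((((((FG₁.add FG₂).sub (FG₂.pa (P12 4))).add (FG₂.pa (P123 4))).sub GF₁).add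
    GF₂).sub (GF₂.pa (P12 4))).sub GF₃).add (GF₃.pa (P23 4))).sub
      (GF₃.pa (P132 4))).congr fun d x => ?_
  simp only [zero_mul, one_mul, Int.natAbs_zero, pow_zero, one_smul]
  rfl

end Computes

end Formulas

section KoszulSign

theorem koszulSign_eq_one {m : ℕ} {d : Fin m → ℤ} (σ : Equiv.Perm (Fin m))
    (h : ∀ i j, i < j → σ j < σ i → d i * d j = 0) : koszulSign d σ = 1 := by
  refine Finset.prod_eq_one fun p hp => ?_
  obtain ⟨hlt, hinv⟩ := (Finset.mem_filter.1 hp).2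
  rw [h _ _ hlt hinv, Int.natAbs_zero, pow_zero]

theorem koszulSign_of_forall_eq_zero {m : ℕ} {d : Fin m → ℤ} (hd : ∀ j, d j = 0)
    (σ : Equiv.Perm (Fin m)) : koszulSign d σ = 1 :=
  koszulSign_eq_one σ fun i j _ _ => by rw [hd i, zero_mul]

theorem koszulSign_P12_two {d : Fin 2 → ℤ} (h : d 0 = 0 ∨ d 1 = 0) :
    koszulSign d (P12 2) = 1 := by
  refine koszulSign_eq_one _ fun i j hij hinv => ?_
  obtain ⟨rfl, rfl⟩ : i = 0 ∧ j = 1 := by revert i j; decide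
  exact mul_eq_zero.2 h

theorem koszulSign_P12_three {d : Fin 3 → ℤ} (h : d 0 = 0 ∨ d 1 = 0) :
    koszulSign d (P12 3) = 1 := by
  refine koszulSign_eq_one _ fun i j hij hinv => ?_
  obtain ⟨rfl, rfl⟩ : i = 0 ∧ j = 1 := by revert i j; decide
  exact mul_eq_zero.2 h

end KoszulSign

/-! ### CLWX 2-algebroids -/

/-- The operations of a CLWX 2-algebroid, without axioms: the differential `∂ = pd`, the
components `c00`, `c01`, `c10` of `∘`, the pairing `S` of `E0` with `E1`, `D = Dm` and `Ω = Om`.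
The anchor is not recorded, since `ρ x f = S x (Dm f)`. -/
structure CLWXData (k R E0 E1 : Type) [CommRing k] [AddCommGroup R] [AddCommGroup E0]
    [AddCommGroup E1] [Module k R] [Module k E0] [Module k E1] where
  pd : E1 →ₗ[k] E0
  Dm : R →ₗ[k] E1
  c00 : E0 →ₗ[k] E0 →ₗ[k] E0
  c01 : E0 →ₗ[k] E1 →ₗ[k] E1
  c10 : E1 →ₗ[k] E0 →ₗ[k] E1
  S : E0 →ₗ[k] E1 →ₗ[k] R
  Om : E0 →ₗ[k] E0 →ₗ[k] E0 →ₗ[k] E1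

namespace CLWXData

variable {k R E0 E1 : Type} [CommRing k] [AddCommGroup R] [AddCommGroup E0] [AddCommGroup E1]
  [Module k R] [Module k E0] [Module k E1] (A : CLWXData k R E0 E1)

/-- The differential of the complex `E0 ← E1 ← R`. -/
def D : MMap (cl R E0 E1) (cl R E0 E1) 1 (-1) := mkD (fun a => A.pd a) fun f => A.Dm f

/-- The bracket `λ2`. -/
def l2 : MMap (cl R E0 E1) (cl R E0 E1) 2 0 :=
  mkl2 (fun x y => A.c00 x y) (fun x a => A.c01 x a) (fun a x => A.c10 a x) (fun x a => A.S x a)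
    fun f => A.Dm f

/-- The alternator `λ21`. -/
def l21 : MMap (cl R E0 E1) (cl R E0 E1) 2 1 := mkl21 fun x a => A.S x a

/-- The Jacobiator `λ3`. -/
def l3 : MMap (cl R E0 E1) (cl R E0 E1) 3 1 := mkl3 fun x y z => A.Om x y z

/-- The 2-term part `E0 ← E1`, encoded with `PUnit` in degree 2 as in the axiom (C1). -/
def truncate : CLWXData k PUnit E0 E1 where
  pd := A.pd
  Dm := 0
  c00 := A.c00
  c01 := A.c01
  c10 := A.c10
  S := 0
  Om := A.Om

section Total

variable (x : Fin 1 → E0 × E1 × R) (y : Fin 2 → E0 × E1 × R) (z : Fin 3 → E0 × E1 × R)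

/-- The differential on the total space. -/
def totD : E0 × E1 × R := (A.pd (x 0).2.1, A.Dm (x 0).2.2, 0)

/-- The bracket `λ2` on the total space. -/
def tot2 : E0 × E1 × R :=
  (A.c00 (y 0).1 (y 1).1, A.c01 (y 0).1 (y 1).2.1 + A.c10 (y 0).2.1 (y 1).1,
    A.S (y 0).1 (A.Dm (y 1).2.2))

/-- The alternator `λ21` on the total space. -/
def tot21 : E0 × E1 × R := (0, 0, A.S (y 0).1 (y 1).2.1 + A.S (y 1).1 (y 0).2.1)

/-- The Jacobiator `λ3` on the total space. -/
def tot3 : E0 × E1 × R := (0, A.Om (z 0).1 (z 1).1 (z 2).1, 0)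

end Total

section Computes

theorem computes_D : Computes k A.D fun _ => A.totD := by
  intro d x
  unfold D mkD totD
  split_ifs with h1 h2
  · simp only [emb_put0, emb_of_eq_one k h1, map_zero]
  · simp only [emb_put1, emb_of_eq_two k h2, map_zero]
  · rcases isHomog_emb k _ (x 0) with h | ⟨-, y, h⟩ | ⟨h, -⟩ | ⟨h, -⟩
    · simp [h, Prod.ext_iff]
    · simp [h, Prod.ext_iff]
    · exact absurd h h1
    · exact absurd h h2

theorem computes_l2 : Computes k A.l2 fun _ => A.tot2 := by
  intro d x
  unfold l2 mkl2 tot2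
  split_ifs with h1 h2 h3 h4
  · simp [emb_put0, emb_of_eq_zero k h1.1, emb_of_eq_zero k h1.2]
  · simp [emb_put1, emb_of_eq_zero k h2.1, emb_of_eq_one k h2.2]
  · simp [emb_put1, emb_of_eq_one k h3.1, emb_of_eq_zero k h3.2]
  · simp [emb_put2, emb_of_eq_zero k h4.1, emb_of_eq_two k h4.2]
  · rcases isHomog_emb k _ (x 0) with h | ⟨hd, y, h⟩ | ⟨hd, y, h⟩ | ⟨-, y, h⟩ <;>
    rcases isHomog_emb k _ (x 1) with h' | ⟨hd', y', h'⟩ | ⟨hd', y', h'⟩ | ⟨hd', y', h'⟩ <;>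
    first | omega | simp [h, h', Prod.ext_iff]

theorem computes_l21 : Computes k A.l21 fun _ => A.tot21 := by
  intro d x
  unfold l21 mkl21 tot21
  split_ifs with h1 h2
  · simp [emb_put2, emb_of_eq_zero k h1.1, emb_of_eq_one k h1.2]
  · simp [emb_put2, emb_of_eq_one k h2.1, emb_of_eq_zero k h2.2]
  · rcases isHomog_emb k _ (x 0) with h | ⟨hd, y, h⟩ | ⟨hd, y, h⟩ | ⟨-, y, h⟩ <;>
    rcases isHomog_emb k _ (x 1) with h' | ⟨hd', y', h'⟩ | ⟨hd', y', h'⟩ | ⟨-, y', h'⟩ <;>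
    first | omega | simp [h, h', Prod.ext_iff]

theorem computes_l3 : Computes k A.l3 fun _ => A.tot3 := by
  intro d x
  unfold l3 mkl3 tot3
  split_ifs with h
  · simp [emb_put1, emb_of_eq_zero k h.1, emb_of_eq_zero k h.2.1, emb_of_eq_zero k h.2.2]
  · simp only [not_and_or] at h
    rcases h with h | h | h <;> simp [(isHomog_emb k _ (x _)).fst_eq_zero h, Prod.ext_iff]

theorem isMultilinear_D : IsMultilinear k A.D := by
  refine A.computes_D.isMultilinear (fun x j a b => ?_) fun x j c a => ?_ <;>
  fin_cases j <;> simp [totD]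

theorem isMultilinear_l2 : IsMultilinear k A.l2 := by
  refine A.computes_l2.isMultilinear (fun x j a b => ?_) fun x j c a => ?_ <;>
  fin_cases j <;> simp [tot2, add_add_add_comm]

theorem isMultilinear_l21 : IsMultilinear k A.l21 := by
  refine A.computes_l21.isMultilinear (fun x j a b => ?_) fun x j c a => ?_ <;>
  fin_cases j <;> simp [tot21, add_add_add_comm]

theorem isMultilinear_l3 : IsMultilinear k A.l3 := by
  refine A.computes_l3.isMultilinear (fun x j a b => ?_) fun x j c a => ?_ <;>
  fin_cases j <;> simp [tot3]

end Computes

end CLWXData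

namespace CLWXData

variable {k R E0 E1 : Type} [CommRing k] [AddCommGroup R] [AddCommGroup E0] [AddCommGroup E1]
  [Module k R] [Module k E0] [Module k E1] (A : CLWXData k R E0 E1)

section Components

theorem fc1_D_eq_zero_iff : fc1 (-2) A.D A.D = 0 ↔ ∀ f, A.pd (A.Dm f) = 0 := by
  rw [(A.computes_D.fc1 (-2) (by norm_num) A.computes_D).eq_iff .zero]
  refine ⟨fun h f => ?_, fun h d x _ => ?_⟩
  · exact congrArg Prod.fst (h ![2] ![(0, 0, f)] (Fin.forall_fin_one.2 (.two_mk f)))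
  · simp [totD, h]

theorem bd_l2_eq_zero_iff :
    bd (-1) A.D A.D A.l2 = 0 ↔
      (∀ x a, A.pd (A.c01 x a) = A.c00 x (A.pd a)) ∧
      (∀ a x, A.pd (A.c10 a x) = A.c00 (A.pd a) x) ∧
      (∀ a b, A.c01 (A.pd a) b = A.c10 a (A.pd b)) ∧
      (∀ x f, A.c01 x (A.Dm f) = A.Dm (A.S x (A.Dm f))) ∧
      (∀ f x, A.c10 (A.Dm f) x = 0) ∧
      ∀ a f, A.S (A.pd a) (A.Dm f) = 0 := by
  rw [(A.computes_D.bd_two (add_zero _) A.computes_l2).eq_iff .zero]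
  refine ⟨fun h => ⟨fun x a => ?_, fun a x => ?_, fun a b => ?_, fun x f => ?_, fun f x => ?_,
    fun a f => ?_⟩, ?_⟩
  · simpa [totD, tot2, sub_eq_zero] using
      h ![0, 1] ![(x, 0, 0), (0, a, 0)] (Fin.forall_fin_two.2 ⟨.zero_mk x, .one_mk a⟩)
  · simpa [totD, tot2, sub_eq_zero] using
      h ![1, 0] ![(0, a, 0), (x, 0, 0)] (Fin.forall_fin_two.2 ⟨.one_mk a, .zero_mk x⟩)
  · refine Eq.symm ?_
    simpa [totD, tot2, sub_eq_zero, ← sub_eq_add_neg] using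
      h ![1, 1] ![(0, a, 0), (0, b, 0)] (Fin.forall_fin_two.2 ⟨.one_mk a, .one_mk b⟩)
  · refine Eq.symm ?_
    simpa [totD, tot2, sub_eq_zero] using
      h ![0, 2] ![(x, 0, 0), (0, 0, f)] (Fin.forall_fin_two.2 ⟨.zero_mk x, .two_mk f⟩)
  · simpa [totD, tot2] using
      h ![2, 0] ![(0, 0, f), (x, 0, 0)] (Fin.forall_fin_two.2 ⟨.two_mk f, .zero_mk x⟩)
  · simpa [totD, tot2] using
      h ![1, 2] ![(0, a, 0), (0, 0, f)] (Fin.forall_fin_two.2 ⟨.one_mk a, .two_mk f⟩)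
  · rintro ⟨h01, h10, h11, h02, h20, h12⟩ d x hx
    rcases hx 0 with h0 | ⟨d0, y, h0⟩ | ⟨d0, y, h0⟩ | ⟨d0, y, h0⟩ <;>
    rcases hx 1 with h1 | ⟨-, z, h1⟩ | ⟨-, z, h1⟩ | ⟨-, z, h1⟩ <;>
    simp [totD, tot2, *]

theorem bd_l3_eq_leibnizDefect_iff :
    bd 0 A.D A.D A.l3 = leibnizDefect A.l2 ↔
      (∀ x y z, A.pd (A.Om x y z) =
        A.c00 x (A.c00 y z) - A.c00 (A.c00 x y) z - A.c00 y (A.c00 x z)) ∧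
      (∀ x y a, A.Om x y (A.pd a) =
        A.c01 x (A.c01 y a) - A.c01 (A.c00 x y) a - A.c01 y (A.c01 x a)) ∧
      (∀ x a y, A.Om x (A.pd a) y =
        A.c01 x (A.c10 a y) - A.c10 (A.c01 x a) y - A.c10 a (A.c00 x y)) ∧
      (∀ a x y, A.Om (A.pd a) x y =
        A.c10 a (A.c00 x y) - A.c10 (A.c10 a x) y - A.c01 x (A.c10 a y)) ∧
      ∀ x y f, A.S x (A.Dm (A.S y (A.Dm f))) - A.S (A.c00 x y) (A.Dm f)
        - A.S y (A.Dm (A.S x (A.Dm f))) = 0 := by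
  rw [(A.computes_D.bd_three (by norm_num) A.computes_l3).eq_iff A.computes_l2.leibnizDefect]
  refine ⟨fun h => ⟨fun x y z => ?_, fun x y a => ?_, fun x a y => ?_, fun a x y => ?_,
    fun x y f => ?_⟩, ?_⟩
  · simpa [totD, tot2, tot3, koszulSign_P12_three] using congrArg Prod.fst
      (h ![0, 0, 0] ![(x, 0, 0), (y, 0, 0), (z, 0, 0)]
        (by simp [Fin.forall_fin_succ, IsHomog.zero_mk]))
  · simpa [totD, tot2, tot3, koszulSign_P12_three] using
      h ![0, 0, 1] ![(x, 0, 0), (y, 0, 0), (0, a, 0)]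
        (by simp [Fin.forall_fin_succ, IsHomog.zero_mk, IsHomog.one_mk])
  · simpa [totD, tot2, tot3, koszulSign_P12_three] using
      h ![0, 1, 0] ![(x, 0, 0), (0, a, 0), (y, 0, 0)]
        (by simp [Fin.forall_fin_succ, IsHomog.zero_mk, IsHomog.one_mk])
  · simpa [totD, tot2, tot3, koszulSign_P12_three] using
      h ![1, 0, 0] ![(0, a, 0), (x, 0, 0), (y, 0, 0)]
        (by simp [Fin.forall_fin_succ, IsHomog.zero_mk, IsHomog.one_mk])
  · simpa [totD, tot2, tot3, koszulSign_P12_three, Prod.ext_iff, eq_comm] using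
      h ![0, 0, 2] ![(x, 0, 0), (y, 0, 0), (0, 0, f)]
        (by simp [Fin.forall_fin_succ, IsHomog.zero_mk, IsHomog.two_mk])
  · rintro ⟨h000, h001, h010, h100, h002⟩ d x hx
    by_cases h0 : d 0 = 0 <;> by_cases h1 : d 1 = 0
    · simp only [totD, tot3, Fin.isValue, Matrix.cons_val_fin_one, h000, map_zero, Int.reduceNeg,
        isUnit_one, Int.natAbs_of_isUnit, pow_one, Matrix.cons_val_zero, Matrix.cons_val_one,
        Matrix.cons_val, h100, h0, Int.natAbs_zero, pow_zero, h010, one_smul, Prod.mk_add_mk,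
        add_zero, h1, h001, neg_smul, Prod.neg_mk, neg_zero, neg_add_rev, neg_sub, Prod.mk_sub_mk,
        sub_zero, zero_sub, sub_self, tot2, map_add, LinearMap.add_apply,
        koszulSign_P12_three (.inl h0), h002, Prod.mk.injEq, and_true, true_and]
      abel
    · simp [totD, tot2, tot3, koszulSign_P12_three (.inl h0), h0, (hx 1).fst_eq_zero h1, h010]
    · simp [totD, tot2, tot3, koszulSign_P12_three (.inr h1), (hx 0).fst_eq_zero h0, h100]
    · simp [totD, tot2, tot3, Prod.ext_iff, (hx 0).fst_eq_zero h0, (hx 1).fst_eq_zero h1]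

theorem coherenceDefect_eq_zero_iff :
    0 = coherenceDefect A.l2 A.l3 ↔
      ∀ w x y z, A.c10 (A.Om w x y) z + A.c01 w (A.Om x y z) - A.c01 x (A.Om w y z)
        + A.c01 y (A.Om w x z) - A.Om (A.c00 w x) y z + A.Om w (A.c00 x y) z
        - A.Om x (A.c00 w y) z - A.Om w x (A.c00 y z) + A.Om w y (A.c00 x z)
        - A.Om x y (A.c00 w z) = 0 := by
  rw [Computes.zero.eq_iff (A.computes_l2.coherenceDefect A.computes_l3)]
  refine ⟨fun h w x y z => ?_, fun h d x hx => ?_⟩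
  · simpa [tot2, tot3, koszulSign_of_forall_eq_zero, Fin.forall_fin_succ, Prod.ext_iff,
      eq_comm] using h ![0, 0, 0, 0] ![(w, 0, 0), (x, 0, 0), (y, 0, 0), (z, 0, 0)]
        (by simp [Fin.forall_fin_succ, IsHomog.zero_mk])
  · by_cases hd : ∀ j, d j = 0
    · simp [tot2, tot3, Prod.ext_iff, hd, koszulSign_of_forall_eq_zero hd, h]
    · obtain ⟨j, hj⟩ := not_forall.1 hd
      have h0 := (hx j).fst_eq_zero hj
      fin_cases j <;> simp_all [tot2, tot3]

end Components

end CLWXData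

namespace CLWXData

variable {k R E0 E1 : Type} [CommRing k] [AddCommGroup R] [AddCommGroup E0] [AddCommGroup E1]
  [Module k R] [Module k E0] [Module k E1] (A : CLWXData k R E0 E1)

section Vanishing

variable {n : ℕ} {s T : ℤ} {ν : MMap (cl R E0 E1) (cl R E0 E1) n s}
  {G : (Fin n → E0 × E1 × R) → E0 × E1 × R}

theorem pc_l3_eq_zero (h : 1 + s = T) (hν : Computes k ν fun _ => G) (hG : ∀ y, (G y).1 = 0) :
    pc T 0 2 A.l3 ν h = 0 ∧ pc T 1 1 A.l3 ν h = 0 ∧ pc T 2 0 A.l3 ν h = 0 := by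
  refine ⟨A.computes_l3.pc_eq_zero h hν fun x y => ?_, A.computes_l3.pc_eq_zero h hν fun x y => ?_,
    A.computes_l3.pc_eq_zero h hν fun x y => ?_⟩ <;>
  simp [tot3, outArg, Fin.append, Fin.addCases, hG]

theorem pc_l2_zero_left (h : 0 + s = T) :
    pc T 0 1 A.l2 (0 : MMap (cl R E0 E1) (cl R E0 E1) n s) h = 0 :=
  A.isMultilinear_l2.pc_zero_right (m₁ := 0) (m₂ := 1) h

theorem pc_l2_zero_right (h : 0 + s = T) :
    pc T 1 0 A.l2 (0 : MMap (cl R E0 E1) (cl R E0 E1) n s) h = 0 :=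
  A.isMultilinear_l2.pc_zero_right (m₁ := 1) (m₂ := 0) h

theorem pc_l21_l21_eq_zero :
    pc 2 0 1 A.l21 A.l21 = 0 ∧ pc 2 1 0 A.l21 A.l21 = 0 := by
  refine ⟨A.computes_l21.pc_eq_zero _ A.computes_l21 fun x y => ?_,
    A.computes_l21.pc_eq_zero _ A.computes_l21 fun x y => ?_⟩ <;>
  simp [tot21, outArg, Fin.append, Fin.addCases]

theorem pc_l2_l21_left_eq_zero : pc 1 0 1 A.l2 A.l21 = 0 :=
  A.computes_l2.pc_eq_zero _ A.computes_l21 fun x y => by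
    simp [tot2, tot21, outArg, Fin.append, Fin.addCases]

end Vanishing

theorem l21_sub_pa_P12 : A.l21 - pa (P12 2) A.l21 = 0 := by
  refine ((A.computes_l21.sub A.computes_l21.pa_P12_two).eq_iff .zero).2 fun d x hx => ?_
  by_cases h0 : d 0 = 0
  · simp [tot21, koszulSign_P12_two (.inl h0), add_comm]
  by_cases h1 : d 1 = 0
  · simp [tot21, koszulSign_P12_two (.inr h1), add_comm]
  · simp [tot21, (hx 0).fst_eq_zero h0, (hx 1).fst_eq_zero h1]

/-- The axioms of a CLWX 2-algebroid in the form needed here: (C2) is polarized and freed of its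
factor `1/2`, and the anchor is written as `ρ x f = S x (Dm f)`, so that they make sense over a
commutative ring and do not involve the product of `R`. -/
structure IsCLWX : Prop where
  skew : ∀ x y, A.c00 x y = -A.c00 y x
  Om_swap_left : ∀ x y z, A.Om y x z = -A.Om x y z
  Om_swap_right : ∀ x y z, A.Om x z y = -A.Om x y z
  C1 : IsLeibniz2 A.truncate.D A.truncate.l2 A.truncate.l3
  C2 : ∀ x a, A.c01 x a + A.c10 a x = A.Dm (A.S x a)
  C3 : ∀ a b, A.S (A.pd a) b = A.S (A.pd b) a
  C4_zero : ∀ x y b, A.S x (A.Dm (A.S y b)) = A.S (A.c00 x y) b + A.S y (A.c01 x b)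
  C4_one : ∀ a y z, A.S z (A.c10 a y) + A.S y (A.c10 a z) = 0
  C5 : ∀ w x y z, A.S z (A.Om w x y) = -A.S y (A.Om w x z)
  C6 : ∀ f, A.pd (A.Dm f) = 0
  C7 : ∀ x f, A.c01 x (A.Dm f) = A.Dm (A.S x (A.Dm f))
  C8 : ∀ f x, A.c10 (A.Dm f) x = 0

namespace IsCLWX

variable {A} (hA : A.IsCLWX)

include hA

theorem isLeibniz2 : IsLeibniz2 A.D A.l2 A.l3 := by
  obtain ⟨h01, h10, h11, -⟩ := A.truncate.bd_l2_eq_zero_iff.1 hA.C1.chain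
  obtain ⟨h000, h001, h010, h100, -⟩ := A.truncate.bd_l3_eq_leibnizDefect_iff.1 hA.C1.leibniz
  refine ⟨?chain, ?leibniz, ?coherence⟩
  case chain =>
    refine A.bd_l2_eq_zero_iff.2 ⟨h01, h10, h11, hA.C7, hA.C8, fun a f => ?_⟩
    rw [hA.C3, hA.C6, map_zero, LinearMap.zero_apply]
  case leibniz =>
    refine A.bd_l3_eq_leibnizDefect_iff.2 ⟨h000, h001, h010, h100, fun x y f => ?_⟩
    rw [hA.C4_zero, hA.C7, add_sub_cancel_left, sub_self]
  case coherence =>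
    exact A.coherenceDefect_eq_zero_iff.2 (A.truncate.coherenceDefect_eq_zero_iff.1 hA.C1.coherence)

theorem isLeibniz3 : IsLeibniz3 k A.D A.l2 A.l3 0 where
  lin2 := A.isMultilinear_l2
  lin3 := A.isMultilinear_l3
  lin4 := .zero
  eqL1 := hA.isLeibniz2.chain
  eqL2 := hA.isLeibniz2.leibniz
  eqL3 := (A.isMultilinear_D.bd_zero _ _).trans hA.isLeibniz2.coherence
  eqL4 := by
    obtain ⟨hleft, hmid, hright⟩ :=
      A.pc_l3_eq_zero one_add_one_eq_two A.computes_l3 fun _ => rfl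
    simp only [hleft, hmid, hright, A.pc_l2_zero_left, A.pc_l2_zero_right, pc_zero_left, pa_zero,
      add_zero, sub_zero]

theorem bd_l21 : bd 0 A.D A.D A.l21 = A.l2 + pa (P12 2) A.l2 := by
  have hskew x y : A.c00 x y + A.c00 y x = 0 := by rw [hA.skew, neg_add_cancel]
  have hC2 a x : A.c10 a x + A.c01 x a = A.Dm (A.S x a) := by rw [add_comm, hA.C2]
  have hC3 := hA.C3
  refine ((A.computes_D.bd_two (by norm_num) A.computes_l21).eq_iff
    (A.computes_l2.add A.computes_l2.pa_P12_two)).2 fun d x hx => ?_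
  have hs := koszulSign_P12_two (d := d)
  rcases hx 0 with h0 | ⟨d0, y, h0⟩ | ⟨d0, y, h0⟩ | ⟨d0, y, h0⟩ <;>
  rcases hx 1 with h1 | ⟨d1, z, h1⟩ | ⟨d1, z, h1⟩ | ⟨d1, z, h1⟩ <;>
  simp [totD, tot2, tot21, Prod.ext_iff, hA.C2, *]

theorem l3_add_pa_P12 : A.l3 + pa (P12 3) A.l3 = 0 := by
  refine ((A.computes_l3.add A.computes_l3.pa_P12_three).eq_iff .zero).2 fun d x hx => ?_
  by_cases h0 : d 0 = 0
  · simp [tot3, koszulSign_P12_three (.inl h0), hA.Om_swap_left (x 0).1]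
  · simp [tot3, (hx 0).fst_eq_zero h0]

theorem l3_add_pa_P23 : A.l3 + pa (P23 3) A.l3 = 0 := by
  refine ((A.computes_l3.add A.computes_l3.pa_P23_three).eq_iff .zero).2 fun d x hx => ?_
  by_cases hd : ∀ j, d j = 0
  · simp [tot3, koszulSign_of_forall_eq_zero hd, hA.Om_swap_right _ (x 1).1]
  · obtain ⟨j, hj⟩ := not_forall.1 hd
    have h0 := (hx j).fst_eq_zero hj
    fin_cases j <;> simp_all [tot3]

theorem pc_l2_l21_right :
    pc 1 1 0 A.l2 A.l21 = pc 1 0 1 A.l21 A.l2 + pa (P12 3) (pc 1 1 0 A.l21 A.l2) := by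
  have hleft := A.computes_l21.pc_two_two_left (add_zero 1) A.computes_l2
  have hright : Computes k (pa (P12 3) (pc 1 1 0 A.l21 A.l2)) fun d x =>
      koszulSign d (P12 3) • A.tot21 ![x 1, A.tot2 ![x 0, x 2]] :=
    ((A.computes_l21.pc_two_two_right (add_zero 1) A.computes_l2).pa (P12 3)).congr
      fun d x => by
        rw [zero_mul, Int.natAbs_zero, pow_zero, one_smul]
        rfl
  refine ((A.computes_l2.pc_two_two_right (zero_add 1) A.computes_l21).eq_iff
    (hleft.add hright)).2 fun d x hx => ?_
  by_cases h0 : d 0 = 0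
  · have hC4 := hA.C4_one (x 0).2.1 (x 1).1 (x 2).1
    simp only [Int.reduceNeg, Fin.isValue, h0, mul_zero, Int.natAbs_zero, pow_zero, tot2, tot21,
      Matrix.cons_val_zero, Matrix.cons_val_one, Matrix.cons_val_fin_one, map_zero, add_zero,
      map_add, hA.C4_zero, one_smul, koszulSign_P12_three (.inl h0), Prod.mk_add_mk,
      Prod.mk.injEq, true_and]
    rw [← sub_eq_zero, ← neg_eq_zero, ← hC4]
    abel
  by_cases h1 : d 1 = 0
  · simp [tot2, tot21, koszulSign_P12_three (.inr h1), (hx 0).fst_eq_zero h0,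
      hA.C4_one]
  · simp [tot2, tot21, (hx 0).fst_eq_zero h0, (hx 1).fst_eq_zero h1]

theorem pc_l21_l3 : pc 2 0 1 A.l21 A.l3 + pa (P123 4) (pc 2 1 0 A.l21 A.l3) = 0 := by
  have hleft := A.computes_l21.pc_two_three_left one_add_one_eq_two A.computes_l3
  have hright : Computes k (pa (P123 4) (pc 2 1 0 A.l21 A.l3)) fun d x =>
      koszulSign d (P123 4) • (-1 : ℤ) ^ (d 2).natAbs • A.tot21 ![x 2, A.tot3 ![x 0, x 1, x 3]] :=
    ((A.computes_l21.pc_two_three_right one_add_one_eq_two A.computes_l3).pa (P123 4)).congr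
      fun d x => by
        rw [one_mul]
        rfl
  refine ((hleft.add hright).eq_iff .zero).2 fun d x hx => ?_
  by_cases hd : ∀ j, d j = 0
  · simp [tot21, tot3, koszulSign_of_forall_eq_zero hd, hd, hA.C5 _ _ (x 3).1]
  · obtain ⟨j, hj⟩ := not_forall.1 hd
    have h0 := (hx j).fst_eq_zero hj
    fin_cases j <;> simp_all [tot21, tot3]

/-- The weak Lie 3-algebra of a CLWX 2-algebroid. -/
def weakLie3 : WeakLie3 k (cl R E0 E1) where
  D := A.D
  l2 := A.l2
  l3 := A.l3
  l4 := 0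
  l21 := A.l21
  l211 := 0
  l31 := 0
  l32 := 0
  linD := A.isMultilinear_D
  dd := A.fc1_D_eq_zero_iff.2 hA.C6
  bound := cl_eq_zero
  leib := hA.isLeibniz3
  lin21 := A.isMultilinear_l21
  lin211 := .zero
  lin31 := .zero
  lin32 := .zero
  w1 := hA.bd_l21
  w2 := by rw [A.isMultilinear_D.bd_zero, A.l21_sub_pa_P12]
  w3 := by rw [A.isMultilinear_D.bd_zero, hA.l3_add_pa_P12, A.pc_l2_l21_left_eq_zero, add_zero]
  w4 := by
    rw [A.isMultilinear_D.bd_zero, hA.l3_add_pa_P23, hA.pc_l2_l21_right]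
    abel
  w5 := by rw [pa_zero, add_zero]
  w6 := by rw [pa_zero, sub_zero, A.pc_l2_zero_left]
  w7 := by
    obtain ⟨hleft, hright⟩ := A.pc_l21_l21_eq_zero
    simp only [hleft, hright, pc_zero_left, pa_zero, add_zero, sub_zero]
  w8 := by simp only [A.pc_l2_zero_right, pc_zero_left, pa_zero, add_zero, sub_zero, neg_zero]
  w9 := by
    obtain ⟨hleft, -⟩ := A.pc_l3_eq_zero one_add_one_eq_two A.computes_l21 fun _ => rfl
    simp only [hleft, A.pc_l2_zero_left, A.pc_l2_zero_right, pc_zero_left, pa_zero, add_zero,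
      sub_zero]
  w10 := by
    obtain ⟨-, hmid, -⟩ := A.pc_l3_eq_zero one_add_one_eq_two A.computes_l21 fun _ => rfl
    simp only [hmid, A.pc_l2_zero_left, A.pc_l2_zero_right, pc_zero_left, pa_zero, add_zero,
      sub_zero]
  w11 := by
    obtain ⟨-, -, hright⟩ := A.pc_l3_eq_zero one_add_one_eq_two A.computes_l21 fun _ => rfl
    simp only [hright, A.pc_l2_zero_right, pc_zero_left, pa_zero, add_zero, sub_zero,
      hA.pc_l21_l3]

end IsCLWX

end CLWXData

theorem weak_Lie3_of_CLWX_general {k R E0 E1 : Type} [CommRing k] [AddCommGroup R]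
    [AddCommGroup E0] [AddCommGroup E1] [Module k R] [Module k E0] [Module k E1]
    (A : CLWXData k R E0 E1) (hA : A.IsCLWX) :
    ∃ W : WeakLie3 k (cl R E0 E1), W.D = A.D ∧ W.l2 = A.l2 ∧ W.l3 = A.l3 ∧ W.l21 = A.l21 ∧
      W.l211 = 0 ∧ W.l31 = 0 ∧ W.l32 = 0 ∧ W.l4 = 0 :=
  ⟨hA.weakLie3, rfl, rfl, rfl, rfl, rfl, rfl, rfl, rfl⟩

/-- **The weak Lie 3-algebra of a CLWX 2-algebroid**: given an (algebraically modeled)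
CLWX 2-algebroid `(R, E0, E1, ∂, ρ, ∘, Ω, S, D)` over a field `k` of characteristic 0,
the 3-term complex `E0 ← E1 ← R` with `λ2` built from `∘` and `λ2(x,f) = S(x,Df)`,
`λ21 = S`, `λ3 = Ω`, and `λ211 = λ31 = λ32 = λ4 = 0` is a weak Lie 3-algebra over `k`. -/
theorem weak_Lie3_of_CLWX
    (k : Type) [Field k] [CharZero k]
    (R : Type) [CommRing R] [Algebra k R]
    (E0 E1 : Type) [AddCommGroup E0] [AddCommGroup E1]
    [Module R E0] [Module R E1] [Module k E0] [Module k E1]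
    [IsScalarTower k R E0] [IsScalarTower k R E1]
    (pd : E1 →ₗ[R] E0)
    (ρ : E0 →ₗ[k] Derivation k R R)
    (S : E0 →ₗ[k] E1 →ₗ[k] R)
    (c00 : E0 →ₗ[k] E0 →ₗ[k] E0) (c01 : E0 →ₗ[k] E1 →ₗ[k] E1) (c10 : E1 →ₗ[k] E0 →ₗ[k] E1)
    (Om : E0 →ₗ[k] E0 →ₗ[k] E0 →ₗ[k] E1)
    (Dm : R →ₗ[k] E1)
    -- `D` is defined by `S(x, Df) = ρ(x)(f)`
    (hD : ∀ (x : E0) (f : R), S x (Dm f) = ρ x f)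
    -- `∘` is skew-symmetric on `E0 × E0`, and `Ω` is a (graded, hence alternating) 3-form
    (hskew : ∀ x y : E0, c00 x y = - c00 y x)
    (hOm12 : ∀ x y z : E0, Om y x z = - Om x y z)
    (hOm23 : ∀ x y z : E0, Om x z y = - Om x y z)
    -- (C1): the 2-term complex `E0 ← E1` with `λ2 = ∘`, `λ3 = Ω` is a Leibniz 2-algebra
    (hC1a : bd (-1) (mkD (R := PUnit) (fun a => pd a) (fun _ => 0))
        (mkD (R := PUnit) (fun a => pd a) (fun _ => 0))
        (mkl2 (R := PUnit) (fun x y => c00 x y) (fun x a => c01 x a) (fun a x => c10 a x)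
          (fun _ _ => 0) (fun _ => 0)) = 0)
    (hC1b : bd 0 (mkD (R := PUnit) (fun a => pd a) (fun _ => 0))
        (mkD (R := PUnit) (fun a => pd a) (fun _ => 0))
        (mkl3 (R := PUnit) (fun x y z => Om x y z)) =
      pc 0 1 0 (mkl2 (R := PUnit) (fun x y => c00 x y) (fun x a => c01 x a)
          (fun a x => c10 a x) (fun _ _ => 0) (fun _ => 0))
        (mkl2 (R := PUnit) (fun x y => c00 x y) (fun x a => c01 x a)
          (fun a x => c10 a x) (fun _ _ => 0) (fun _ => 0))
      - pc 0 0 1 (mkl2 (R := PUnit) (fun x y => c00 x y) (fun x a => c01 x a)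
          (fun a x => c10 a x) (fun _ _ => 0) (fun _ => 0))
        (mkl2 (R := PUnit) (fun x y => c00 x y) (fun x a => c01 x a)
          (fun a x => c10 a x) (fun _ _ => 0) (fun _ => 0))
      - pa (P12 3) (pc 0 1 0 (mkl2 (R := PUnit) (fun x y => c00 x y) (fun x a => c01 x a)
          (fun a x => c10 a x) (fun _ _ => 0) (fun _ => 0))
        (mkl2 (R := PUnit) (fun x y => c00 x y) (fun x a => c01 x a)
          (fun a x => c10 a x) (fun _ _ => 0) (fun _ => 0))))
    (hC1c : (0 : MMap (cl PUnit E0 E1) (cl PUnit E0 E1) 4 1) =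
      pc 1 0 1 (mkl2 (R := PUnit) (fun x y => c00 x y) (fun x a => c01 x a)
          (fun a x => c10 a x) (fun _ _ => 0) (fun _ => 0))
        (mkl3 (R := PUnit) (fun x y z => Om x y z))
      + pc 1 1 0 (mkl2 (R := PUnit) (fun x y => c00 x y) (fun x a => c01 x a)
          (fun a x => c10 a x) (fun _ _ => 0) (fun _ => 0))
        (mkl3 (R := PUnit) (fun x y z => Om x y z))
      - pa (P12 4) (pc 1 1 0 (mkl2 (R := PUnit) (fun x y => c00 x y) (fun x a => c01 x a)
          (fun a x => c10 a x) (fun _ _ => 0) (fun _ => 0))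
        (mkl3 (R := PUnit) (fun x y z => Om x y z)))
      + pa (P123 4) (pc 1 1 0 (mkl2 (R := PUnit) (fun x y => c00 x y) (fun x a => c01 x a)
          (fun a x => c10 a x) (fun _ _ => 0) (fun _ => 0))
        (mkl3 (R := PUnit) (fun x y z => Om x y z)))
      - pc 1 0 2 (mkl3 (R := PUnit) (fun x y z => Om x y z))
        (mkl2 (R := PUnit) (fun x y => c00 x y) (fun x a => c01 x a)
          (fun a x => c10 a x) (fun _ _ => 0) (fun _ => 0))
      + pc 1 1 1 (mkl3 (R := PUnit) (fun x y z => Om x y z))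
        (mkl2 (R := PUnit) (fun x y => c00 x y) (fun x a => c01 x a)
          (fun a x => c10 a x) (fun _ _ => 0) (fun _ => 0))
      - pa (P12 4) (pc 1 1 1 (mkl3 (R := PUnit) (fun x y z => Om x y z))
        (mkl2 (R := PUnit) (fun x y => c00 x y) (fun x a => c01 x a)
          (fun a x => c10 a x) (fun _ _ => 0) (fun _ => 0)))
      - pc 1 2 0 (mkl3 (R := PUnit) (fun x y z => Om x y z))
        (mkl2 (R := PUnit) (fun x y => c00 x y) (fun x a => c01 x a)
          (fun a x => c10 a x) (fun _ _ => 0) (fun _ => 0))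
      + pa (P23 4) (pc 1 2 0 (mkl3 (R := PUnit) (fun x y z => Om x y z))
        (mkl2 (R := PUnit) (fun x y => c00 x y) (fun x a => c01 x a)
          (fun a x => c10 a x) (fun _ _ => 0) (fun _ => 0)))
      - pa (P132 4) (pc 1 2 0 (mkl3 (R := PUnit) (fun x y z => Om x y z))
        (mkl2 (R := PUnit) (fun x y => c00 x y) (fun x a => c01 x a)
          (fun a x => c10 a x) (fun _ _ => 0) (fun _ => 0))))
    -- (C2): `e ∘ e = ½·D S(e,e)`
    (hC2a : ∀ x : E0, c00 x x = 0)
    (hC2b : ∀ (x : E0) (a : E1), c01 x a + c10 a x = (2 : k)⁻¹ • Dm (S x a + S x a))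
    -- (C3)
    (hC3 : ∀ a b : E1, S (pd a) b = S (pd b) a)
    -- (C4), for all homogeneous elements (the nontrivial components)
    (hC4a : ∀ (x y : E0) (b : E1), ρ x (S y b) = S (c00 x y) b + S y (c01 x b))
    (hC4b : ∀ (x z : E0) (a : E1), ρ x (S z a) = S z (c01 x a) + S (c00 x z) a)
    (hC4c : ∀ (a : E1) (y z : E0), S z (c10 a y) + S y (c10 a z) = 0)
    -- (C5)
    (hC5 : ∀ x1 x2 x3 x4 : E0, S x4 (Om x1 x2 x3) = - S x3 (Om x1 x2 x4))
    -- (C6), (C7), (C8)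
    (hC6 : ∀ f : R, pd (Dm f) = 0)
    (hC7 : ∀ (x : E0) (f : R), c01 x (Dm f) = Dm (ρ x f))
    (hC8 : ∀ (f : R) (x : E0), c10 (Dm f) x = 0) :
    ∃ A : WeakLie3 k (cl R E0 E1),
      A.D = mkD (fun a => pd a) (fun f => Dm f) ∧
      A.l2 = mkl2 (fun x y => c00 x y) (fun x a => c01 x a) (fun a x => c10 a x)
        (fun x a => S x a) (fun f => Dm f) ∧
      A.l3 = mkl3 (fun x y z => Om x y z) ∧
      A.l21 = mkl21 (fun x a => S x a) ∧
      A.l211 = 0 ∧ A.l31 = 0 ∧ A.l32 = 0 ∧ A.l4 = 0 := by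
  let A : CLWXData k R E0 E1 :=
    { pd := pd.restrictScalars k, Dm := Dm, c00 := c00, c01 := c01, c10 := c10, S := S, Om := Om }
  exact weak_Lie3_of_CLWX_general A
    { skew := hskew
      Om_swap_left := hOm12
      Om_swap_right := hOm23
      C1 := ⟨hC1a, hC1b, hC1c⟩
      C2 := fun x a => by rw [hC2b, ← two_smul k, map_smul, inv_smul_smul₀ two_ne_zero]
      C3 := hC3
      C4_zero := fun x y b => by rw [hD, hC4a]
      C4_one := hC4c
      C5 := hC5
      C6 := hC6
      C7 := fun x f => by rw [hC7, hD]
      C8 := hC8 }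

end WL3
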